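/- arXiv:2404.05577 — 5 statements merged into one kernel-verified Lean document; each statement's English description precedes it below -/
import Mathlib

section
/- Let 0 < α < 1 and κ ≥ 0, and set μ(y) = |y|^{(2α−1)/2}. Let U : [0,∞) → ℝ be continuous, and define φ(y,t) = μ(y) ∫₀ᵗ e^{−(y²+κ)(t−s)} U(s) ds. Then for every t > 0, the integral ∫_ℝ μ(y) φ(y,t) dy converges absolutely and π^{−1} sin(απ) ∫_ℝ μ(y) φ(y,t) dy = e^{−κt} ∫₀ᵗ ((t−s)^{−α} / Γ(1−α)) e^{κs} U(s) ds. -/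
open MeasureTheory Real

/-!
With `τ = t - s`, Fubini's theorem turns the output into a mixture over `s ∈ (0, t)` of the Gaussian
moments `∫ μ(y) ^ 2 * exp (-τ * y ^ 2) dy = Γ(α) * τ ^ (-α)`. The kernel is positive, so absolute
integrability on the product reduces to that of `(t - s) ^ (-α) * U s` on `(0, t)`. Euler's
reflection formula turns `π⁻¹ * sin(απ) * Γ(α)` into `1 / Γ(1 - α)`.
-/

theorem abs_rpow_half_mul_self (y a : ℝ) : |y| ^ (a / 2) * |y| ^ (a / 2) = |y| ^ a := by
  rw [← mul_rpow (abs_nonneg y) (abs_nonneg y), rpow_div_two_eq_sqrt a (by positivity),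
    sqrt_mul_self (abs_nonneg y)]

theorem inv_pi_mul_sin_mul_Gamma {α : ℝ} (hα : 0 < α) :
    π⁻¹ * sin (α * π) * Gamma α = (Gamma (1 - α))⁻¹ := by
  have hreflection : (Gamma α * Gamma (1 - α))⁻¹ = π⁻¹ * sin (α * π) := by
    rw [Gamma_mul_Gamma_one_sub, inv_div, div_eq_inv_mul, mul_comm π α]
  rw [← hreflection, mul_inv_rev, inv_mul_cancel_right₀ (Gamma_pos_of_pos hα).ne']

section GaussianMoment

variable {α b : ℝ}

theorem integral_abs_rpow_mul_exp_neg_mul_sq (hα : 0 < α) (hb : 0 < b) :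
    ∫ y : ℝ, |y| ^ (2 * α - 1) * exp (-b * y ^ 2) = b ^ (-α) * Gamma α := by
  have heven := integral_comp_abs (f := fun y : ℝ => y ^ (2 * α - 1) * exp (-b * y ^ 2))
  have hhalf := integral_rpow_mul_exp_neg_mul_rpow (p := 2) (q := 2 * α - 1) two_pos
    (by linarith) hb
  simp only [sq_abs] at heven
  simp only [rpow_two, sub_add_cancel, ← mul_neg, mul_div_cancel_left₀ _ (two_ne_zero' ℝ)] at hhalf
  rw [heven, hhalf]
  ring

theorem integrable_abs_rpow_mul_exp_neg_mul_sq (hα : 0 < α) (hb : 0 < b) :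
    Integrable fun y : ℝ => |y| ^ (2 * α - 1) * exp (-b * y ^ 2) := by
  -- The Bochner integral of a non-integrable function is `0`, whereas this one is positive.
  refine Integrable.of_integral_ne_zero ?_
  rw [integral_abs_rpow_mul_exp_neg_mul_sq hα hb]
  exact (mul_pos (rpow_pos_of_pos hb _) (Gamma_pos_of_pos hα)).ne'

end GaussianMoment

section GaussianMixture

variable {X E : Type*} [MeasurableSpace X] [NormedAddCommGroup E] [NormedSpace ℝ E]
  {ν : Measure X} {α : ℝ} {τ : X → ℝ} {V : X → E}

theorem aestronglyMeasurable_of_rpow_smul {r : ℝ} (hτm : AEMeasurable τ ν)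
    (hτ : ∀ᵐ x ∂ν, 0 < τ x) (hV : AEStronglyMeasurable (fun x => τ x ^ r • V x) ν) :
    AEStronglyMeasurable V ν := by
  refine ((hτm.pow_const r).inv.aestronglyMeasurable.smul hV).congr ?_
  filter_upwards [hτ] with x hx
  exact inv_smul_smul₀ (rpow_pos_of_pos hx r).ne' (V x)

variable [SFinite ν]

theorem integrable_prod_abs_rpow_mul_exp_neg_mul_sq_smul (hα : 0 < α) (hτm : AEMeasurable τ ν)
    (hτ : ∀ᵐ x ∂ν, 0 < τ x) (hV : Integrable (fun x => τ x ^ (-α) • V x) ν) :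
    Integrable (fun p : ℝ × X => (|p.1| ^ (2 * α - 1) * exp (-τ p.2 * p.1 ^ 2)) • V p.2)
      (volume.prod ν) := by
  have hVm := aestronglyMeasurable_of_rpow_smul hτm hτ hV.aestronglyMeasurable
  have hkernel : AEMeasurable (fun p : ℝ × X => |p.1| ^ (2 * α - 1) * exp (-τ p.2 * p.1 ^ 2))
      (volume.prod ν) := by
    have := hτm.comp_snd (μ := (volume : Measure ℝ))
    fun_prop
  refine (integrable_prod_iff' (hkernel.aestronglyMeasurable.smul hVm.comp_snd)).2 ⟨?_, ?_⟩
  · filter_upwards [hτ] with x hx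
    exact (integrable_abs_rpow_mul_exp_neg_mul_sq hα hx).smul_const (V x)
  · refine (hV.norm.const_mul (Gamma α)).congr ?_
    filter_upwards [hτ] with x hx
    calc Gamma α * ‖τ x ^ (-α) • V x‖
        = τ x ^ (-α) * Gamma α * ‖V x‖ := by
          rw [norm_smul, norm_of_nonneg (rpow_nonneg hx.le _), ← mul_assoc, mul_comm (Gamma α)]
      _ = ∫ y : ℝ, |y| ^ (2 * α - 1) * exp (-τ x * y ^ 2) * ‖V x‖ := by
          rw [integral_mul_const, integral_abs_rpow_mul_exp_neg_mul_sq hα hx]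
      _ = ∫ y : ℝ, ‖(|y| ^ (2 * α - 1) * exp (-τ x * y ^ 2)) • V x‖ :=
          integral_congr_ae (.of_forall fun y => by
            simp only [norm_smul, norm_of_nonneg (show
              0 ≤ |y| ^ (2 * α - 1) * exp (-τ x * y ^ 2) by positivity)])

theorem integral_integral_abs_rpow_mul_exp_neg_mul_sq_smul [CompleteSpace E] (hα : 0 < α)
    (hτm : AEMeasurable τ ν) (hτ : ∀ᵐ x ∂ν, 0 < τ x)
    (hV : Integrable (fun x => τ x ^ (-α) • V x) ν) :
    ∫ y : ℝ, ∫ x, (|y| ^ (2 * α - 1) * exp (-τ x * y ^ 2)) • V x ∂ν =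
      Gamma α • ∫ x, τ x ^ (-α) • V x ∂ν := by
  rw [integral_integral_swap (integrable_prod_abs_rpow_mul_exp_neg_mul_sq_smul hα hτm hτ hV),
    ← integral_smul]
  refine integral_congr_ae ?_
  filter_upwards [hτ] with x hx
  rw [integral_smul_const, integral_abs_rpow_mul_exp_neg_mul_sq hα hx, smul_smul, mul_comm]

end GaussianMixture

section DiffusionRealization

variable {E : Type*} [NormedAddCommGroup E] [NormedSpace ℝ E]

/-- The weight `μ(y)` through which the diffusion realization both receives its input and is
observed. -/
noncomputable def diffusionWeight (α y : ℝ) : ℝ := |y| ^ ((2 * α - 1) / 2)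

/-- The state `φ(y, t)` of the diffusion realization with input `U`: the solution of
`∂ₜφ + (y ^ 2 + κ) φ = U(t) μ(y)` vanishing at `t = 0`, written by Duhamel's formula. -/
noncomputable def diffusionState (α κ : ℝ) (U : ℝ → E) (y t : ℝ) : E :=
  diffusionWeight α y • ∫ s in (0 : ℝ)..t, exp (-(y ^ 2 + κ) * (t - s)) • U s

/-- The output `O(t)` of the diffusion realization with input `U`. -/
noncomputable def diffusionOutput (α κ : ℝ) (U : ℝ → E) (t : ℝ) : E :=
  (π⁻¹ * sin (α * π)) • ∫ y : ℝ, diffusionWeight α y • diffusionState α κ U y t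

/-- The generalized (exponentially tempered) fractional integral `I^{β,κ} U (t)` of order `β`, based
at `0`. -/
noncomputable def generalizedFracIntegral (β κ : ℝ) (U : ℝ → E) (t : ℝ) : E :=
  exp (-κ * t) • ∫ s in (0 : ℝ)..t, ((t - s) ^ (β - 1) / Gamma β * exp (κ * s)) • U s

variable {α t : ℝ}

theorem diffusionWeight_smul_diffusionState (ht : 0 ≤ t) (κ : ℝ) (U : ℝ → E) (y : ℝ) :
    diffusionWeight α y • diffusionState α κ U y t =
      ∫ s in Set.Ioo 0 t,
        (|y| ^ (2 * α - 1) * exp (-(t - s) * y ^ 2)) • exp (-κ * (t - s)) • U s := by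
  rw [diffusionState, diffusionWeight, smul_smul, abs_rpow_half_mul_self,
    intervalIntegral.integral_of_le ht, integral_Ioc_eq_integral_Ioo, ← integral_smul]
  congr with s
  rw [smul_smul, smul_smul, mul_assoc, ← exp_add]
  ring_nf

theorem generalizedFracIntegral_eq_inv_Gamma_smul (ht : 0 ≤ t) (β κ : ℝ) (U : ℝ → E) :
    generalizedFracIntegral β κ U t =
      (Gamma β)⁻¹ • ∫ s in Set.Ioo 0 t, (t - s) ^ (β - 1) • exp (-κ * (t - s)) • U s := by
  rw [generalizedFracIntegral, intervalIntegral.integral_of_le ht, integral_Ioc_eq_integral_Ioo,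
    ← integral_smul, ← integral_smul]
  congr with s
  rw [show -κ * (t - s) = -κ * t + κ * s by ring, exp_add]
  simp only [smul_smul]
  ring_nf

theorem integrableOn_Ioo_sub_rpow_smul_exp_smul {r : ℝ} {U : ℝ → E} (ht : 0 ≤ t) (κ : ℝ)
    (hU : IntervalIntegrable (fun s => (t - s) ^ r • U s) volume 0 t) :
    IntegrableOn (fun s => (t - s) ^ r • exp (-κ * (t - s)) • U s) (Set.Ioo 0 t) := by
  rw [← intervalIntegrable_iff_integrableOn_Ioo_of_le ht]
  simp only [smul_comm _ (exp _)]
  exact hU.continuousOn_smul (by fun_prop)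

theorem intervalIntegrable_sub_rpow_smul {a r : ℝ} {U : ℝ → E} (hr : -1 < r)
    (hU : ContinuousOn U (Set.uIcc a t)) :
    IntervalIntegrable (fun s => (t - s) ^ r • U s) volume a t := by
  have hpow := (intervalIntegral.intervalIntegrable_rpow' (a := t - a) (b := 0) hr).comp_sub_left t
  rw [sub_sub_cancel, sub_zero] at hpow
  exact hpow.smul_continuousOn hU

-- At integers `α ≥ 1` both sides vanish: `sin (α * π) = 0`, and the junk value `Gamma (1 - α) = 0`
-- gives `(Gamma (1 - α))⁻¹ = 0`, the value there of the entire function `1 / Γ`.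
theorem stmt1_general [CompleteSpace E] (hα : 0 < α) (κ : ℝ) (U : ℝ → E) (ht : 0 ≤ t)
    (hU : IntervalIntegrable (fun s => (t - s) ^ (-α) • U s) volume 0 t) :
    Integrable (fun y : ℝ => diffusionWeight α y • diffusionState α κ U y t) ∧
      diffusionOutput α κ U t = generalizedFracIntegral (1 - α) κ U t := by
  have hlag : ∀ᵐ s ∂volume.restrict (Set.Ioo 0 t), 0 < t - s :=
    (ae_restrict_mem measurableSet_Ioo).mono fun s hs => sub_pos.2 hs.2
  have hlagm : AEMeasurable (fun s => t - s) (volume.restrict (Set.Ioo 0 t)) := by fun_prop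
  have hV := integrableOn_Ioo_sub_rpow_smul_exp_smul ht κ hU
  simp only [diffusionOutput, diffusionWeight_smul_diffusionState ht]
  refine ⟨(integrable_prod_abs_rpow_mul_exp_neg_mul_sq_smul hα hlagm hlag hV).integral_prod_left,
    ?_⟩
  rw [integral_integral_abs_rpow_mul_exp_neg_mul_sq_smul hα hlagm hlag hV, smul_smul,
    inv_pi_mul_sin_mul_Gamma hα, generalizedFracIntegral_eq_inv_Gamma_smul ht,
    sub_sub_cancel_left]

end DiffusionRealization

/-- The output of the diffusion realization equals the generalized
fractional integral of order `1-α` of the input `U` (Theorem 2.1 of the paper). -/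
theorem stmt1 (α κ : ℝ) (hα0 : 0 < α) (hα1 : α < 1) (hκ : 0 ≤ κ)
    (U : ℝ → ℝ) (hU : ContinuousOn U (Set.Ici 0)) (t : ℝ) (ht : 0 < t) :
    Integrable (fun y : ℝ => |y| ^ ((2 * α - 1) / 2) *
      (|y| ^ ((2 * α - 1) / 2) *
        ∫ s in (0 : ℝ)..t, Real.exp (-(y ^ 2 + κ) * (t - s)) * U s)) ∧
    π⁻¹ * Real.sin (α * π) *
        ∫ y : ℝ, |y| ^ ((2 * α - 1) / 2) *
          (|y| ^ ((2 * α - 1) / 2) *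
            ∫ s in (0 : ℝ)..t, Real.exp (-(y ^ 2 + κ) * (t - s)) * U s) =
      Real.exp (-κ * t) *
        ∫ s in (0 : ℝ)..t, ((t - s) ^ (-α) / Real.Gamma (1 - α)) * Real.exp (κ * s) * U s := by
  have hU' := intervalIntegrable_sub_rpow_smul (neg_lt_neg hα1)
    (hU.mono ((Set.uIcc_of_le ht.le).trans_subset Set.Icc_subset_Ici_self))
  simpa [diffusionOutput, diffusionState, diffusionWeight, generalizedFracIntegral] using
    stmt1_general hα0 κ U ht.le hU'
end

section
/- Let 0 < α < 1, κ ≥ 0, and let λ ∈ ℂ with λ ∉ (−∞, −κ]. Then the complex-valued integral ∫_ℝ |y|^{2α−1}/(y² + κ + λ) dy converges absolutely and equals (π / sin(απ)) · (κ + λ)^{α−1}, where the complex power denotes the principal branch. -/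
/-!
Only `z = κ + λ`, a point of the slit plane, matters. For `z = x > 0`, write
`1 / (y² + x) = ∫_{s > 0} exp (-s (y² + x)) ds` and exchange the integrals: the inner integral is
the Gaussian moment `Γ(α) s^(-α) exp (-s x)`, and integrating it over `s` gives
`Γ(α) Γ(1 - α) x^(α - 1)`, which Euler's reflection formula evaluates. In general, `|t + z|` is
bounded below by a multiple of `t + 1` for all `t ≥ 0`, locally uniformly in `z`. So the integral
converges absolutely and is holomorphic on the slit plane as soon as it converges at `z = 1`, and
the identity theorem extends the formula from the positive half-line.
-/

open MeasureTheory Real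

open scoped Topology

section Laplace

lemma integral_Ioi_exp_neg_mul {a : ℝ} (ha : 0 < a) :
    ∫ s in Set.Ioi (0 : ℝ), exp (-s * a) = a⁻¹ := by
  simpa [mul_comm, neg_div] using integral_exp_mul_Ioi (neg_neg_of_pos ha) 0

variable {X : Type*} [MeasurableSpace X] {μ : Measure X} [SFinite μ] {w a : X → ℝ}

lemma integrable_prod_mul_exp_neg_mul (hwm : AEMeasurable w μ) (ham : AEMeasurable a μ)
    (hw : ∀ x, 0 ≤ w x)
    (hwint : ∀ s > 0, Integrable (fun x => w x * exp (-s * a x)) μ)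
    (hL : IntegrableOn (fun s => ∫ x, w x * exp (-s * a x) ∂μ) (Set.Ioi 0)) :
    Integrable (fun q : X × ℝ => w q.1 * exp (-q.2 * a q.1))
      (μ.prod (volume.restrict (Set.Ioi 0))) := by
  have hmeas : AEMeasurable (fun q : X × ℝ => w q.1 * exp (-q.2 * a q.1))
      (μ.prod (volume.restrict (Set.Ioi 0))) :=
    hwm.comp_fst.mul (measurable_snd.neg.aemeasurable.mul ham.comp_fst).exp
  refine (integrable_prod_iff' hmeas.aestronglyMeasurable).2
    ⟨ae_restrict_of_forall_mem measurableSet_Ioi hwint, hL.congr <| ae_of_all _ fun s => ?_⟩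
  exact integral_congr_ae <| ae_of_all _ fun x =>
    (norm_of_nonneg (mul_nonneg (hw x) (exp_nonneg _))).symm

lemma integrable_div_of_integrableOn_laplace (hwm : AEMeasurable w μ) (ham : AEMeasurable a μ)
    (hw : ∀ x, 0 ≤ w x) (ha : ∀ x, 0 < a x)
    (hwint : ∀ s > 0, Integrable (fun x => w x * exp (-s * a x)) μ)
    (hL : IntegrableOn (fun s => ∫ x, w x * exp (-s * a x) ∂μ) (Set.Ioi 0)) :
    Integrable (fun x => w x / a x) μ := by
  simpa only [integral_const_mul, integral_Ioi_exp_neg_mul (ha _), ← div_eq_mul_inv] using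
    (integrable_prod_mul_exp_neg_mul hwm ham hw hwint hL).integral_prod_left

lemma integral_div_eq_integral_laplace (hwm : AEMeasurable w μ) (ham : AEMeasurable a μ)
    (hw : ∀ x, 0 ≤ w x) (ha : ∀ x, 0 < a x)
    (hwint : ∀ s > 0, Integrable (fun x => w x * exp (-s * a x)) μ)
    (hL : IntegrableOn (fun s => ∫ x, w x * exp (-s * a x) ∂μ) (Set.Ioi 0)) :
    ∫ x, w x / a x ∂μ = ∫ s in Set.Ioi 0, ∫ x, w x * exp (-s * a x) ∂μ := by
  simpa only [integral_const_mul, integral_Ioi_exp_neg_mul (ha _), ← div_eq_mul_inv] using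
    integral_integral_swap (f := fun x s => w x * exp (-s * a x))
      (integrable_prod_mul_exp_neg_mul hwm ham hw hwint hL)

end Laplace

section Gaussian

lemma integral_abs_rpow_mul_exp_neg_mul_abs_rpow {p q b : ℝ} (hp : 0 < p) (hq : -1 < q)
    (hb : 0 < b) :
    ∫ y : ℝ, |y| ^ q * exp (-b * |y| ^ p) =
      2 * (b ^ (-(q + 1) / p) * (1 / p) * Gamma ((q + 1) / p)) := by
  rw [integral_comp_abs (f := fun y => y ^ q * exp (-b * y ^ p)),
    integral_rpow_mul_exp_neg_mul_rpow hp hq hb]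

lemma integrable_abs_rpow_mul_exp_neg_mul_abs_rpow {p q b : ℝ} (hp : 0 < p) (hq : -1 < q)
    (hb : 0 < b) :
    Integrable fun y : ℝ => |y| ^ q * exp (-b * |y| ^ p) := by
  -- The Bochner integral of a non-integrable function is `0`.
  refine Integrable.of_integral_ne_zero ?_
  rw [integral_abs_rpow_mul_exp_neg_mul_abs_rpow hp hq hb]
  have hq' : 0 < (q + 1) / p := div_pos (by linarith) hp
  exact (mul_pos two_pos (mul_pos (by positivity) (Gamma_pos_of_pos hq'))).ne'

variable {α s x : ℝ}

lemma abs_rpow_mul_exp_neg_mul_sq_add (q s x y : ℝ) :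
    |y| ^ q * exp (-s * (y ^ 2 + x)) = exp (-(x * s)) * (|y| ^ q * exp (-s * |y| ^ (2 : ℝ))) := by
  rw [rpow_two, sq_abs, mul_left_comm, ← exp_add]
  ring_nf

lemma integrable_abs_rpow_mul_exp_neg_mul_sq_add {q : ℝ} (hq : -1 < q) (hs : 0 < s) (x : ℝ) :
    Integrable fun y : ℝ => |y| ^ q * exp (-s * (y ^ 2 + x)) := by
  simpa only [abs_rpow_mul_exp_neg_mul_sq_add] using
    (integrable_abs_rpow_mul_exp_neg_mul_abs_rpow two_pos hq hs).const_mul _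

lemma integral_abs_rpow_mul_exp_neg_mul_sq_add (hα : 0 < α) (hs : 0 < s) (x : ℝ) :
    ∫ y : ℝ, |y| ^ (2 * α - 1) * exp (-s * (y ^ 2 + x)) =
      Gamma α * (s ^ ((1 - α) - 1) * exp (-(x * s))) := by
  simp only [abs_rpow_mul_exp_neg_mul_sq_add]
  rw [integral_const_mul,
    integral_abs_rpow_mul_exp_neg_mul_abs_rpow two_pos (by linarith) hs,
    show -(2 * α - 1 + 1) / 2 = 1 - α - 1 by ring, show (2 * α - 1 + 1) / 2 = α by ring]
  ring

lemma integral_Ioi_integral_abs_rpow_mul_exp_neg_mul_sq_add (hα0 : 0 < α) (hα1 : α < 1)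
    (hx : 0 < x) :
    ∫ s in Set.Ioi 0, ∫ y : ℝ, |y| ^ (2 * α - 1) * exp (-s * (y ^ 2 + x)) =
      π / sin (α * π) * x ^ (α - 1) := by
  calc ∫ s in Set.Ioi 0, ∫ y : ℝ, |y| ^ (2 * α - 1) * exp (-s * (y ^ 2 + x))
      = ∫ s in Set.Ioi 0, Gamma α * (s ^ ((1 - α) - 1) * exp (-(x * s))) :=
        setIntegral_congr_fun measurableSet_Ioi fun s hs =>
          integral_abs_rpow_mul_exp_neg_mul_sq_add hα0 hs x
    _ = Gamma α * ((1 / x) ^ (1 - α) * Gamma (1 - α)) := by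
        rw [integral_const_mul, integral_rpow_mul_exp_neg_mul_Ioi (by linarith) hx]
    _ = Gamma α * Gamma (1 - α) * x ^ (α - 1) := by
        rw [one_div, inv_rpow hx.le, ← rpow_neg hx.le, neg_sub]
        ring
    _ = π / sin (α * π) * x ^ (α - 1) := by rw [Gamma_mul_Gamma_one_sub, mul_comm π]

lemma integrableOn_Ioi_integral_abs_rpow_mul_exp_neg_mul_sq_add (hα0 : 0 < α) (hα1 : α < 1)
    (hx : 0 < x) :
    IntegrableOn (fun s => ∫ y : ℝ, |y| ^ (2 * α - 1) * exp (-s * (y ^ 2 + x)))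
      (Set.Ioi 0) := by
  refine Integrable.of_integral_ne_zero ?_
  rw [integral_Ioi_integral_abs_rpow_mul_exp_neg_mul_sq_add hα0 hα1 hx]
  have hsin : 0 < sin (α * π) := sin_pos_of_pos_of_lt_pi (by positivity) (by nlinarith [pi_pos])
  positivity

lemma integrable_abs_rpow_div_sq_add (hα0 : 0 < α) (hα1 : α < 1) (hx : 0 < x) :
    Integrable fun y : ℝ => |y| ^ (2 * α - 1) / (y ^ 2 + x) :=
  integrable_div_of_integrableOn_laplace (by fun_prop) (by fun_prop) (fun _ => by positivity)
    (fun _ => by positivity)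
    (fun _ hs => integrable_abs_rpow_mul_exp_neg_mul_sq_add (by linarith) hs x)
    (integrableOn_Ioi_integral_abs_rpow_mul_exp_neg_mul_sq_add hα0 hα1 hx)

lemma integral_abs_rpow_div_sq_add (hα0 : 0 < α) (hα1 : α < 1) (hx : 0 < x) :
    ∫ y : ℝ, |y| ^ (2 * α - 1) / (y ^ 2 + x) = π / sin (α * π) * x ^ (α - 1) := by
  rw [← integral_Ioi_integral_abs_rpow_mul_exp_neg_mul_sq_add hα0 hα1 hx]
  exact integral_div_eq_integral_laplace (by fun_prop) (by fun_prop) (fun _ => by positivity)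
    (fun _ => by positivity)
    (fun _ hs => integrable_abs_rpow_mul_exp_neg_mul_sq_add (by linarith) hs x)
    (integrableOn_Ioi_integral_abs_rpow_mul_exp_neg_mul_sq_add hα0 hα1 hx)

end Gaussian

section SlitPlane

variable {z : ℂ}

lemma norm_add_re_pos_of_mem_slitPlane (hz : z ∈ Complex.slitPlane) : 0 < ‖z‖ + z.re := by
  have hne : z.re ≠ -‖z‖ :=
    mt Complex.re_eq_neg_norm.1 (Complex.mem_slitPlane_iff_not_le_zero.1 hz)
  have hle : -‖z‖ ≤ z.re := neg_le_of_abs_le (Complex.abs_re_le_norm z)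
  linarith [hle.lt_of_ne' hne]

lemma norm_add_re_mul_add_norm_sq_le (z : ℂ) (t : ℝ) :
    (‖z‖ + z.re) * (t + ‖z‖) ^ 2 ≤ 2 * ‖z‖ * ‖(t : ℂ) + z‖ ^ 2 := by
  have hsq : ‖(t : ℂ) + z‖ ^ 2 = t ^ 2 + 2 * t * z.re + ‖z‖ ^ 2 := by
    simp only [Complex.sq_norm, Complex.normSq_apply, Complex.add_re, Complex.add_im,
      Complex.ofReal_re, Complex.ofReal_im]
    ring
  have hdiff : 0 ≤ (‖z‖ - z.re) * (t - ‖z‖) ^ 2 :=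
    mul_nonneg (sub_nonneg.2 (Complex.re_le_norm z)) (sq_nonneg _)
  rw [hsq]
  linarith

lemma exists_mul_add_one_le_norm_add (hz : z ∈ Complex.slitPlane) :
    ∃ c > 0, ∀ t : ℝ, 0 ≤ t → c * (t + 1) ≤ ‖(t : ℂ) + z‖ := by
  have hr : 0 < ‖z‖ := norm_pos_iff.2 (Complex.slitPlane_ne_zero hz)
  have hre := norm_add_re_pos_of_mem_slitPlane hz
  -- `q = cos² (θ / 2)` for `θ = arg z`
  set q : ℝ := (‖z‖ + z.re) / (2 * ‖z‖) with hq
  have hq0 : 0 < q := by positivity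
  refine ⟨√q * min 1 ‖z‖, by positivity, fun t ht => ?_⟩
  have hmin : min 1 ‖z‖ * (t + 1) ≤ t + ‖z‖ := by
    nlinarith [min_le_left 1 ‖z‖, min_le_right 1 ‖z‖]
  have hsq : q * (t + ‖z‖) ^ 2 ≤ ‖(t : ℂ) + z‖ ^ 2 := by
    rw [hq, div_mul_eq_mul_div, div_le_iff₀' (by positivity)]
    exact norm_add_re_mul_add_norm_sq_le z t
  calc √q * min 1 ‖z‖ * (t + 1) = √q * (min 1 ‖z‖ * (t + 1)) := mul_assoc _ _ _
    _ ≤ √q * (t + ‖z‖) := by gcongr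
    _ = √(q * (t + ‖z‖) ^ 2) := by rw [sqrt_mul hq0.le, sqrt_sq (by positivity)]
    _ ≤ ‖(t : ℂ) + z‖ := (sqrt_le_left (norm_nonneg _)).2 hsq

lemma exists_eventually_mul_add_one_le_norm_add (hz : z ∈ Complex.slitPlane) :
    ∃ c > 0, ∀ᶠ ζ in 𝓝 z, ∀ t : ℝ, 0 ≤ t → c * (t + 1) ≤ ‖(t : ℂ) + ζ‖ := by
  obtain ⟨c, hc, hbound⟩ := exists_mul_add_one_le_norm_add hz
  refine ⟨c / 2, half_pos hc, ?_⟩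
  filter_upwards [Metric.ball_mem_nhds z (half_pos hc)] with ζ hζ t ht
  have hdist : ‖z - ζ‖ < c / 2 := by rwa [← dist_eq_norm, dist_comm]
  have htri : ‖(t : ℂ) + z‖ ≤ ‖(t : ℂ) + ζ‖ + ‖z - ζ‖ := by
    simpa using norm_add_le ((t : ℂ) + ζ) (z - ζ)
  nlinarith [hbound t ht]

lemma norm_div_add_pow_le {c t : ℝ} {n : ℕ} (hn : n ≠ 0) (hc : 0 < c) (ht : 0 ≤ t)
    (hbound : c * (t + 1) ≤ ‖(t : ℂ) + z‖) (u : ℂ) :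
    ‖u / ((t : ℂ) + z) ^ n‖ ≤ (c ^ n)⁻¹ * ‖u / ((t : ℂ) + 1)‖ := by
  have hnorm : ‖(t : ℂ) + 1‖ = t + 1 := by
    rw [← Complex.ofReal_one, ← Complex.ofReal_add, Complex.norm_of_nonneg (by positivity)]
  have hpow : c ^ n * (t + 1) ≤ ‖(t : ℂ) + z‖ ^ n :=
    calc c ^ n * (t + 1) ≤ c ^ n * (t + 1) ^ n := by
          gcongr
          exact le_self_pow₀ (by linarith) hn
      _ = (c * (t + 1)) ^ n := (mul_pow _ _ _).symm
      _ ≤ ‖(t : ℂ) + z‖ ^ n := by gcongr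
  rw [norm_div, norm_div, norm_pow, hnorm]
  calc ‖u‖ / ‖(t : ℂ) + z‖ ^ n ≤ ‖u‖ / (c ^ n * (t + 1)) := by gcongr
    _ = (c ^ n)⁻¹ * (‖u‖ / (t + 1)) := by field_simp

lemma eqOn_slitPlane_of_forall_pos_ofReal_eq {E : Type*} [NormedAddCommGroup E]
    [NormedSpace ℂ E] [CompleteSpace E] {f g : ℂ → E}
    (hf : DifferentiableOn ℂ f Complex.slitPlane) (hg : DifferentiableOn ℂ g Complex.slitPlane)
    (hfg : ∀ x : ℝ, 0 < x → f x = g x) : Set.EqOn f g Complex.slitPlane := by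
  have hconn : IsPreconnected Complex.slitPlane :=
    (Complex.starConvex_one_slitPlane.isPathConnected
      Complex.one_mem_slitPlane).isConnected.isPreconnected
  have htendsto : Filter.Tendsto ((↑) : ℝ → ℂ) (𝓝[≠] 1) (𝓝[≠] 1) :=
    Complex.continuous_ofReal.continuousWithinAt.tendsto_nhdsWithin fun _ =>
      Complex.ofReal_ne_one.2
  have hfreq : ∃ᶠ z in 𝓝[≠] (1 : ℂ), f z = g z := by
    refine htendsto.frequently (Filter.Eventually.frequently ?_)
    filter_upwards [nhdsWithin_le_nhds (lt_mem_nhds one_pos)] with x hx using hfg x hx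
  exact (hf.analyticOnNhd Complex.isOpen_slitPlane).eqOn_of_preconnected_of_frequently_eq
    (hg.analyticOnNhd Complex.isOpen_slitPlane) hconn Complex.one_mem_slitPlane hfreq

end SlitPlane

section Stieltjes

variable {X : Type*} [MeasurableSpace X] {μ : Measure X} {w : X → ℂ} {p : X → ℝ} {z : ℂ}

lemma integrable_div_add_pow (hw : AEStronglyMeasurable w μ) (hp : AEMeasurable p μ)
    (hp0 : ∀ x, 0 ≤ p x) (hwint : Integrable (fun x => w x / ((p x : ℂ) + 1)) μ)
    (hz : z ∈ Complex.slitPlane) {n : ℕ} (hn : n ≠ 0) :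
    Integrable (fun x => w x / ((p x : ℂ) + z) ^ n) μ := by
  obtain ⟨c, hc, hbound⟩ := exists_mul_add_one_le_norm_add hz
  have hmeas : AEStronglyMeasurable (fun x => w x / ((p x : ℂ) + z) ^ n) μ :=
    (hw.aemeasurable.div (by fun_prop)).aestronglyMeasurable
  exact (hwint.norm.const_mul _).mono' hmeas <| ae_of_all _ fun x =>
    norm_div_add_pow_le hn hc (hp0 x) (hbound _ (hp0 x)) _

lemma integrable_div_add (hw : AEStronglyMeasurable w μ) (hp : AEMeasurable p μ)
    (hp0 : ∀ x, 0 ≤ p x) (hwint : Integrable (fun x => w x / ((p x : ℂ) + 1)) μ)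
    (hz : z ∈ Complex.slitPlane) : Integrable (fun x => w x / ((p x : ℂ) + z)) μ := by
  simpa only [pow_one] using integrable_div_add_pow hw hp hp0 hwint hz one_ne_zero

lemma hasDerivAt_const_div_const_add (u v : ℂ) (hz : v + z ≠ 0) :
    HasDerivAt (fun ζ => u / (v + ζ)) (-(u / (v + z) ^ 2)) z := by
  simpa [div_eq_mul_inv] using (((hasDerivAt_id z).const_add v).inv hz).const_mul u

lemma hasDerivAt_integral_div_add (hw : AEStronglyMeasurable w μ) (hp : AEMeasurable p μ)
    (hp0 : ∀ x, 0 ≤ p x) (hwint : Integrable (fun x => w x / ((p x : ℂ) + 1)) μ)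
    (hz : z ∈ Complex.slitPlane) :
    HasDerivAt (fun ζ => ∫ x, w x / ((p x : ℂ) + ζ) ∂μ)
      (∫ x, -(w x / ((p x : ℂ) + z) ^ 2) ∂μ) z := by
  obtain ⟨c, hc, hbound⟩ := exists_eventually_mul_add_one_le_norm_add hz
  refine (hasDerivAt_integral_of_dominated_loc_of_deriv_le
    (F' := fun ζ x => -(w x / ((p x : ℂ) + ζ) ^ 2))
    (bound := fun x => (c ^ 2)⁻¹ * ‖w x / ((p x : ℂ) + 1)‖) hbound
    ?_ (integrable_div_add hw hp hp0 hwint hz)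
    (integrable_div_add_pow hw hp hp0 hwint hz two_ne_zero).neg.aestronglyMeasurable
    (ae_of_all _ fun x ζ hζ => ?_) (hwint.norm.const_mul _) (ae_of_all _ fun x ζ hζ => ?_)).2
  · filter_upwards [Complex.isOpen_slitPlane.mem_nhds hz] with ζ hζ
    exact (integrable_div_add hw hp hp0 hwint hζ).aestronglyMeasurable
  · rw [norm_neg]
    exact norm_div_add_pow_le two_ne_zero hc (hp0 x) (hζ _ (hp0 x)) _
  · have hpos : 0 < c * (p x + 1) := mul_pos hc (by linarith [hp0 x])
    exact hasDerivAt_const_div_const_add _ _ <|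
      norm_pos_iff.1 (hpos.trans_le (hζ _ (hp0 x)))

lemma differentiableOn_integral_div_add (hw : AEStronglyMeasurable w μ) (hp : AEMeasurable p μ)
    (hp0 : ∀ x, 0 ≤ p x) (hwint : Integrable (fun x => w x / ((p x : ℂ) + 1)) μ) :
    DifferentiableOn ℂ (fun z => ∫ x, w x / ((p x : ℂ) + z) ∂μ) Complex.slitPlane :=
  fun _ hz => (hasDerivAt_integral_div_add hw hp hp0 hwint
    hz).differentiableAt.differentiableWithinAt

end Stieltjes

lemma ofReal_add_mem_slitPlane {κ : ℝ} {lam : ℂ} (hlam : ∀ r : ℝ, r ≤ -κ → lam ≠ (r : ℂ)) :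
    (κ : ℂ) + lam ∈ Complex.slitPlane := by
  rw [Complex.mem_slitPlane_iff_not_le_zero, Complex.nonpos_iff]
  rintro ⟨hre, him⟩
  simp only [Complex.add_re, Complex.add_im, Complex.ofReal_re, Complex.ofReal_im,
    zero_add] at hre him
  exact hlam lam.re (by linarith) (Complex.ext rfl him)

theorem stmt3_general {α : ℝ} (hα0 : 0 < α) (hα1 : α < 1) {z : ℂ}
    (hz : z ∈ Complex.slitPlane) :
    Integrable (fun y : ℝ => ((|y| ^ (2 * α - 1) : ℝ) : ℂ) / ((y : ℂ) ^ 2 + z)) ∧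
    ∫ y : ℝ, ((|y| ^ (2 * α - 1) : ℝ) : ℂ) / ((y : ℂ) ^ 2 + z) =
      ((π / Real.sin (α * π) : ℝ) : ℂ) * z ^ ((α : ℂ) - 1) := by
  have hw : AEStronglyMeasurable fun y : ℝ => ((|y| ^ (2 * α - 1) : ℝ) : ℂ) :=
    Measurable.aestronglyMeasurable (by fun_prop)
  have hp : AEMeasurable fun y : ℝ => y ^ 2 := by fun_prop
  have hwint : Integrable fun y : ℝ =>
      ((|y| ^ (2 * α - 1) : ℝ) : ℂ) / (((y ^ 2 : ℝ) : ℂ) + 1) := by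
    simpa using (integrable_abs_rpow_div_sq_add hα0 hα1 one_pos).ofReal (𝕜 := ℂ)
  have hpow : DifferentiableOn ℂ
      (fun z : ℂ => ((π / Real.sin (α * π) : ℝ) : ℂ) * z ^ ((α : ℂ) - 1))
      Complex.slitPlane := fun z hz =>
    ((differentiableAt_id.cpow_const hz).const_mul _).differentiableWithinAt
  have hreal (x : ℝ) (hx : 0 < x) :
      ∫ y : ℝ, ((|y| ^ (2 * α - 1) : ℝ) : ℂ) / (((y ^ 2 : ℝ) : ℂ) + x) =
        ((π / Real.sin (α * π) : ℝ) : ℂ) * (x : ℂ) ^ ((α : ℂ) - 1) := by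
    rw [← Complex.ofReal_one, ← Complex.ofReal_sub, ← Complex.ofReal_cpow hx.le]
    exact_mod_cast congrArg ((↑) : ℝ → ℂ) (integral_abs_rpow_div_sq_add hα0 hα1 hx)
  simp only [← Complex.ofReal_pow]
  exact ⟨integrable_div_add hw hp (fun y => sq_nonneg y) hwint hz,
    eqOn_slitPlane_of_forall_pos_ofReal_eq
      (differentiableOn_integral_div_add hw hp (fun y => sq_nonneg y) hwint) hpow hreal hz⟩

/-- Lemma 2.2 of the paper: for `λ ∈ ℂ \ (-∞, -κ]`,
`∫_ℝ |y|^(2α-1)/(y² + κ + λ) dy = (π / sin(απ)) (κ + λ)^(α-1)` (principal branch). -/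
theorem stmt3 (α κ : ℝ) (hα0 : 0 < α) (hα1 : α < 1) (hκ : 0 ≤ κ)
    (lam : ℂ) (hlam : ∀ r : ℝ, r ≤ -κ → lam ≠ (r : ℂ)) :
    Integrable (fun y : ℝ =>
      ((|y| ^ (2 * α - 1) : ℝ) : ℂ) / ((y : ℂ) ^ 2 + (κ : ℂ) + lam)) ∧
    ∫ y : ℝ, ((|y| ^ (2 * α - 1) : ℝ) : ℂ) / ((y : ℂ) ^ 2 + (κ : ℂ) + lam) =
      ((π / Real.sin (α * π) : ℝ) : ℂ) * ((κ : ℂ) + lam) ^ ((α : ℂ) - 1) := by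
  simpa only [add_assoc] using stmt3_general hα0 hα1 (ofReal_add_mem_slitPlane hlam)
end

section
/- Let 0 < α < 1, κ ≥ 0 and λ ∈ ℝ with λ ≠ 0. Then Re(iλ (κ + iλ)^{α−1}) = (sin(απ)/π) · λ² · ∫_ℝ |y|^{2α−1} / ((y²+κ)² + λ²) dy, and in particular Re(iλ (κ + iλ)^{α−1}) > 0. -/
open MeasureTheory Real

/-!
The symbol is read off the Stieltjes formula
`∫₀^∞ t^(a-1) / (t + z) dt = π / sin (πa) · z^(a-1)`, valid on the whole slit plane. For `z = x > 0`
it follows by integrating `t^(a-1) e^(-(t+x)s)` over the quadrant in both orders, which produces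
`Γ(a) Γ(1-a) x^(a-1)`, and from Euler's reflection formula; both sides are holomorphic on the slit
plane, so the identity theorem extends it. The slit plane contains every `z = κ + iλ` with `λ ≠ 0`,
so multiplying by `iλ`, taking real parts and substituting `t = y²` gives the identity, whose
right-hand side has a positive integrand.
-/

section StieltjesTransform

lemma norm_ofReal_add_one {t : ℝ} (ht : 0 ≤ t) : ‖(t : ℂ) + 1‖ = t + 1 := by
  exact_mod_cast Complex.norm_of_nonneg (by positivity : 0 ≤ t + 1)

-- `(t + z) / (t + 1)` lies on the segment from `1` to `z`, a compact subset of the slit plane.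
lemma exists_pos_forall_mul_le_norm_ofReal_add {z : ℂ} (hz : z ∈ Complex.slitPlane) :
    ∃ c > 0, ∀ t : ℝ, 0 ≤ t → c * ‖(t : ℂ) + 1‖ ≤ ‖(t : ℂ) + z‖ := by
  have hclosed : IsClosed (segment ℝ 1 z) := by
    rw [segment_eq_image]
    exact (isCompact_Icc.image (by fun_prop)).isClosed
  have hzero : 0 ∉ segment ℝ 1 z := fun h ↦
    Complex.slitPlane_ne_zero (Complex.starConvex_one_slitPlane.segment_subset hz h) rfl
  refine ⟨Metric.infDist 0 (segment ℝ 1 z),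
    (hclosed.notMem_iff_infDist_pos ⟨1, left_mem_segment ℝ 1 z⟩).1 hzero, fun t ht ↦ ?_⟩
  have hmem : (t + 1)⁻¹ • ((t : ℂ) + z) ∈ segment ℝ 1 z := by
    refine ⟨t / (t + 1), (t + 1)⁻¹, by positivity, by positivity, by field_simp, ?_⟩
    simp only [Complex.real_smul, Complex.ofReal_div, Complex.ofReal_inv]
    ring
  rw [norm_ofReal_add_one ht, ← le_div_iff₀ (by positivity)]
  calc Metric.infDist 0 (segment ℝ 1 z)
      ≤ ‖(t + 1)⁻¹ • ((t : ℂ) + z)‖ := by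
        simpa only [dist_zero_left] using Metric.infDist_le_dist_of_mem (x := 0) hmem
    _ = ‖(t : ℂ) + z‖ / (t + 1) := by
        rw [norm_smul, Real.norm_of_nonneg (by positivity), inv_mul_eq_div]

lemma exists_pos_eventually_forall_mul_le_norm_ofReal_add {z : ℂ} (hz : z ∈ Complex.slitPlane) :
    ∃ c > 0, ∀ᶠ w in nhds z, ∀ t : ℝ, 0 ≤ t → c * ‖(t : ℂ) + 1‖ ≤ ‖(t : ℂ) + w‖ := by
  obtain ⟨c, hc, hbound⟩ := exists_pos_forall_mul_le_norm_ofReal_add hz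
  refine ⟨c / 2, half_pos hc, ?_⟩
  filter_upwards [Metric.ball_mem_nhds z (half_pos hc)] with w hw t ht
  have hdist : ‖z - w‖ < c / 2 := by rwa [Metric.mem_ball', dist_eq_norm] at hw
  have htriangle : ‖(t : ℂ) + z‖ ≤ ‖(t : ℂ) + w‖ + ‖z - w‖ := by
    simpa only [add_add_sub_cancel] using norm_add_le ((t : ℂ) + w) (z - w)
  have hlower := hbound t ht
  rw [norm_ofReal_add_one ht] at hlower ⊢
  nlinarith

variable {E : Type*} [NormedAddCommGroup E] [NormedSpace ℂ E]

/-- The Stieltjes transform of a function on the half-line `(0, ∞)`, used to represent complex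
powers by integrals of real ones. The kernel is `1 / (t + z)` rather than `1 / (t - z)`, so that the
transform is holomorphic off `(-∞, 0]`. Where the integral does not converge absolutely it has the
junk value `0`. -/
noncomputable def stieltjesTransform (f : ℝ → E) (z : ℂ) : E :=
  ∫ t in Set.Ioi (0 : ℝ), ((t : ℂ) + z)⁻¹ • f t

variable {f : ℝ → E}

lemma integrableOn_inv_ofReal_add_smul
    (hf : IntegrableOn (fun t : ℝ ↦ ((t : ℂ) + 1)⁻¹ • f t) (Set.Ioi 0))
    {z : ℂ} (hz : z ∈ Complex.slitPlane) :
    IntegrableOn (fun t : ℝ ↦ ((t : ℂ) + z)⁻¹ • f t) (Set.Ioi 0) := by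
  obtain ⟨c, hc, hbound⟩ := exists_pos_forall_mul_le_norm_ofReal_add hz
  have hratio : ∀ᵐ t : ℝ ∂volume.restrict (Set.Ioi 0), ‖((t : ℂ) + 1) / ((t : ℂ) + z)‖ ≤ c⁻¹ := by
    filter_upwards [ae_restrict_mem measurableSet_Ioi] with t (ht : 0 < t)
    rw [norm_div]
    refine div_le_of_le_mul₀ (norm_nonneg _) (by positivity) ?_
    rw [le_inv_mul_iff₀ hc]
    exact hbound t ht.le
  refine (hf.bdd_smul c⁻¹ (Measurable.aestronglyMeasurable (by fun_prop)) hratio).congr ?_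
  filter_upwards [ae_restrict_mem measurableSet_Ioi] with t (ht : 0 < t)
  have hne : (t : ℂ) + 1 ≠ 0 := by exact_mod_cast (by positivity : t + 1 ≠ 0)
  simp only [Pi.smul_apply', smul_smul]
  congr 1
  field_simp

theorem differentiableOn_stieltjesTransform
    (hf : IntegrableOn (fun t : ℝ ↦ ((t : ℂ) + 1)⁻¹ • f t) (Set.Ioi 0)) :
    DifferentiableOn ℂ (stieltjesTransform f) Complex.slitPlane := by
  intro z hz
  obtain ⟨c, hc, hbound⟩ := exists_pos_eventually_forall_mul_le_norm_ofReal_add hz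
  have hint := integrableOn_inv_ofReal_add_smul hf hz
  have hderiv := hasDerivAt_integral_of_dominated_loc_of_deriv_le
    (μ := volume.restrict (Set.Ioi (0 : ℝ)))
    (F := fun w (t : ℝ) ↦ ((t : ℂ) + w)⁻¹ • f t)
    (F' := fun w (t : ℝ) ↦ (-((t : ℂ) + w)⁻¹) • ((t : ℂ) + w)⁻¹ • f t)
    (bound := fun t ↦ c⁻¹ * (c⁻¹ * ‖((t : ℂ) + 1)⁻¹ • f t‖))
    hbound ?_ hint
    (.smul (Measurable.aestronglyMeasurable (by fun_prop)) hint.aestronglyMeasurable) ?_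
    ((hf.norm.const_mul _).const_mul _) ?_
  · exact hderiv.2.differentiableAt.differentiableWithinAt
  · filter_upwards [Complex.isOpen_slitPlane.mem_nhds hz] with w hw
    exact (integrableOn_inv_ofReal_add_smul hf hw).aestronglyMeasurable
  · filter_upwards [ae_restrict_mem measurableSet_Ioi] with t (ht : 0 < t) w hw
    have hone : 1 ≤ ‖(t : ℂ) + 1‖ := by
      rw [norm_ofReal_add_one ht.le]
      linarith
    have hlower := hw t ht.le
    have hinv_le : ‖(t : ℂ) + w‖⁻¹ ≤ c⁻¹ := by
      gcongr
      nlinarith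
    have hinv_le_mul : ‖(t : ℂ) + w‖⁻¹ ≤ c⁻¹ * ‖(t : ℂ) + 1‖⁻¹ := by
      rw [← mul_inv]
      gcongr
    simp only [norm_smul, norm_neg, norm_inv, ← mul_assoc (c⁻¹) (‖(t : ℂ) + 1‖⁻¹)]
    gcongr
  · filter_upwards [ae_restrict_mem measurableSet_Ioi] with t (ht : 0 < t) w hw
    have hne : (t : ℂ) + w ≠ 0 := by
      have hlower := hw t ht.le
      rw [norm_ofReal_add_one ht.le] at hlower
      exact norm_pos_iff.1 ((by positivity : 0 < c * (t + 1)).trans_le hlower)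
    refine ((((hasDerivAt_id w).const_add (t : ℂ)).inv hne).smul_const (f t)).congr_deriv ?_
    rw [smul_smul]
    congr 1
    simp only [id_eq]
    field_simp

lemma eqOn_slitPlane_of_forall_pos_eq [CompleteSpace E] {f g : ℂ → E}
    (hf : DifferentiableOn ℂ f Complex.slitPlane) (hg : DifferentiableOn ℂ g Complex.slitPlane)
    (hfg : ∀ x : ℝ, 0 < x → f x = g x) : Set.EqOn f g Complex.slitPlane := by
  have hconn : IsPreconnected Complex.slitPlane :=
    (Complex.starConvex_one_slitPlane.isPathConnected
      Complex.one_mem_slitPlane).isConnected.isPreconnected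
  refine (hf.analyticOnNhd Complex.isOpen_slitPlane).eqOn_of_preconnected_of_frequently_eq
    (hg.analyticOnNhd Complex.isOpen_slitPlane) hconn Complex.one_mem_slitPlane ?_
  have hofReal : Filter.Tendsto ((↑) : ℝ → ℂ) (nhdsWithin 1 {1}ᶜ) (nhdsWithin 1 {1}ᶜ) :=
    (Complex.continuous_ofReal.tendsto' 1 1 Complex.ofReal_one).inf
      (Filter.tendsto_principal_principal.2 fun x hx h ↦ hx (Complex.ofReal_eq_one.1 h))
  have hpos : ∀ᶠ x : ℝ in nhdsWithin 1 {1}ᶜ, 0 < x :=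
    eventually_nhdsWithin_of_eventually_nhds (lt_mem_nhds one_pos)
  exact hofReal.frequently (hpos.frequently.mono hfg)

end StieltjesTransform

section PowerFunction

lemma integrableOn_rpow_div_add {α x : ℝ} (hα0 : 0 < α) (hα1 : α < 1) (hx : 0 < x) :
    IntegrableOn (fun t : ℝ ↦ t ^ (α - 1) / (t + x)) (Set.Ioi 0) := by
  refine IntegrableOn.congr_fun
    ((integrableOn_rpowIntegrand₀₁_Ioi ⟨hα0, hα1⟩ hx.le).const_mul x⁻¹) ?_ measurableSet_Ioi
  intro t (ht : 0 < t)
  simp only [rpowIntegrand₀₁_eq_pow_div ⟨hα0, hα1⟩ ht.le hx.le]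
  field_simp

variable {a : ℂ}

lemma integrableOn_inv_ofReal_add_one_smul_cpow (ha0 : 0 < a.re) (ha1 : a.re < 1) :
    IntegrableOn (fun t : ℝ ↦ ((t : ℂ) + 1)⁻¹ • (t : ℂ) ^ (a - 1)) (Set.Ioi 0) := by
  refine (integrableOn_rpow_div_add ha0 ha1 one_pos).mono'
    (Measurable.aestronglyMeasurable (by fun_prop)) ?_
  filter_upwards [ae_restrict_mem measurableSet_Ioi] with t (ht : 0 < t)
  rw [norm_smul, norm_inv, norm_ofReal_add_one ht.le, Complex.norm_cpow_eq_rpow_re_of_pos ht,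
    Complex.sub_re, Complex.one_re, inv_mul_eq_div]

lemma integrable_cpow_mul_exp_neg_prod {x : ℝ} (ha0 : 0 < a.re) (ha1 : a.re < 1) (hx : 0 < x) :
    Integrable (fun p : ℝ × ℝ ↦ (p.1 : ℂ) ^ (a - 1) * Complex.exp (-(p.1 + x) * p.2))
      ((volume.restrict (Set.Ioi 0)).prod (volume.restrict (Set.Ioi 0))) := by
  rw [integrable_prod_iff (Measurable.aestronglyMeasurable (by fun_prop))]
  constructor
  · filter_upwards [ae_restrict_mem measurableSet_Ioi] with t (ht : 0 < t)
    have hre : (-((t : ℂ) + x)).re < 0 := by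
      simp only [Complex.neg_re, Complex.add_re, Complex.ofReal_re]
      linarith
    exact (integrableOn_exp_mul_complex_Ioi hre 0).const_mul _
  · refine (integrableOn_rpow_div_add ha0 ha1 hx).congr_fun (fun t (ht : 0 < t) ↦ ?_)
      measurableSet_Ioi
    have hnorm (s : ℝ) : ‖Complex.exp (-(t + x) * s)‖ = rexp (-(t + x) * s) := by
      exact_mod_cast Complex.norm_exp_ofReal (-(t + x) * s)
    have hexp : ∫ s in Set.Ioi (0 : ℝ), rexp (-(t + x) * s) = (t + x)⁻¹ := by
      rw [integral_exp_mul_Ioi (by linarith), mul_zero, Real.exp_zero, neg_div_neg_eq, one_div]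
    simp only [norm_mul, hnorm, Complex.norm_cpow_eq_rpow_re_of_pos ht, Complex.sub_re,
      Complex.one_re]
    rw [integral_const_mul, hexp, div_eq_mul_inv]

lemma integral_exp_neg_mul_Ioi {w : ℂ} (hw : 0 < w.re) :
    ∫ s in Set.Ioi (0 : ℝ), Complex.exp (-w * s) = w⁻¹ := by
  have hre : (-w).re < 0 := by rwa [Complex.neg_re, neg_lt_zero]
  rw [integral_exp_mul_complex_Ioi hre, Complex.ofReal_zero, mul_zero, Complex.exp_zero,
    neg_div_neg_eq, one_div]

lemma one_div_ofReal_cpow {x : ℝ} (hx : 0 < x) (b : ℂ) : (1 / (x : ℂ)) ^ b = (x : ℂ) ^ (-b) := by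
  have harg : (x : ℂ).arg ≠ π := by
    rw [Complex.arg_ofReal_of_nonneg hx.le]
    exact pi_ne_zero.symm
  rw [one_div, Complex.inv_cpow _ _ harg, Complex.cpow_neg]

lemma integral_cpow_mul_exp_neg_add_mul_Ioi {s : ℝ} (w : ℂ) (ha0 : 0 < a.re) (hs : 0 < s) :
    ∫ t in Set.Ioi (0 : ℝ), (t : ℂ) ^ (a - 1) * Complex.exp (-(t + w) * s) =
      Complex.Gamma a * ((s : ℂ) ^ (-a) * Complex.exp (-(w * s))) := by
  have hsplit (t : ℝ) : (t : ℂ) ^ (a - 1) * Complex.exp (-(t + w) * s) =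
      (t : ℂ) ^ (a - 1) * Complex.exp (-(s * t)) * Complex.exp (-(w * s)) := by
    rw [mul_assoc, ← Complex.exp_add]
    ring_nf
  simp only [hsplit]
  rw [integral_mul_const, Complex.integral_cpow_mul_exp_neg_mul_Ioi ha0 hs, one_div_ofReal_cpow hs]
  ring

lemma stieltjesTransform_cpow_ofReal {x : ℝ} (ha0 : 0 < a.re) (ha1 : a.re < 1) (hx : 0 < x) :
    stieltjesTransform (fun t : ℝ ↦ (t : ℂ) ^ (a - 1)) x =
      π / Complex.sin (π * a) * (x : ℂ) ^ (a - 1) := by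
  calc stieltjesTransform (fun t : ℝ ↦ (t : ℂ) ^ (a - 1)) x
      = ∫ t in Set.Ioi (0 : ℝ), ∫ s in Set.Ioi (0 : ℝ),
          (t : ℂ) ^ (a - 1) * Complex.exp (-(t + x) * s) := by
        refine setIntegral_congr_fun measurableSet_Ioi fun t (ht : 0 < t) ↦ ?_
        simp only [integral_const_mul]
        have hre : 0 < ((t : ℂ) + x).re := by
          rw [Complex.add_re, Complex.ofReal_re, Complex.ofReal_re]
          positivity
        rw [integral_exp_neg_mul_Ioi hre, smul_eq_mul, mul_comm]
    _ = ∫ s in Set.Ioi (0 : ℝ), ∫ t in Set.Ioi (0 : ℝ),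
          (t : ℂ) ^ (a - 1) * Complex.exp (-(t + x) * s) :=
        integral_integral_swap (integrable_cpow_mul_exp_neg_prod ha0 ha1 hx)
    _ = ∫ s in Set.Ioi (0 : ℝ),
          Complex.Gamma a * ((s : ℂ) ^ ((1 - a) - 1) * Complex.exp (-(x * s))) := by
        refine setIntegral_congr_fun measurableSet_Ioi fun s hs ↦ ?_
        simp only [integral_cpow_mul_exp_neg_add_mul_Ioi (x : ℂ) ha0 hs, sub_sub_cancel_left]
    _ = Complex.Gamma a * Complex.Gamma (1 - a) * (1 / x) ^ (1 - a) := by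
        have hre : 0 < (1 - a).re := by
          rw [Complex.sub_re, Complex.one_re]
          linarith
        rw [integral_const_mul, Complex.integral_cpow_mul_exp_neg_mul_Ioi hre hx]
        ring
    _ = π / Complex.sin (π * a) * (x : ℂ) ^ (a - 1) := by
        rw [Complex.Gamma_mul_Gamma_one_sub, one_div_ofReal_cpow hx, neg_sub]

theorem stieltjesTransform_cpow {z : ℂ} (ha0 : 0 < a.re) (ha1 : a.re < 1)
    (hz : z ∈ Complex.slitPlane) :
    stieltjesTransform (fun t : ℝ ↦ (t : ℂ) ^ (a - 1)) z =
      π / Complex.sin (π * a) * z ^ (a - 1) :=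
  eqOn_slitPlane_of_forall_pos_eq
    (differentiableOn_stieltjesTransform (integrableOn_inv_ofReal_add_one_smul_cpow ha0 ha1))
    (fun _ hw ↦ ((differentiableAt_id.cpow_const hw).const_mul _).differentiableWithinAt)
    (fun _ hx ↦ stieltjesTransform_cpow_ofReal ha0 ha1 hx) hz

end PowerFunction

section RealPart

variable {α lam : ℝ} (κ : ℝ)

lemma ofReal_add_I_mul_mem_slitPlane (hlam : lam ≠ 0) :
    (κ : ℂ) + Complex.I * lam ∈ Complex.slitPlane :=
  Complex.mem_slitPlane_iff.2 (.inr (by simpa using hlam))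

lemma re_I_mul_mul_inv_add_smul_cpow {t : ℝ} (ht : 0 < t) :
    (Complex.I * lam * (((t : ℂ) + (κ + Complex.I * lam))⁻¹ • (t : ℂ) ^ ((α : ℂ) - 1))).re =
      lam ^ 2 * (t ^ (α - 1) / ((t + κ) ^ 2 + lam ^ 2)) := by
  have hpow : (t : ℂ) ^ ((α : ℂ) - 1) = (t ^ (α - 1) : ℝ) := by
    rw [Complex.ofReal_cpow ht.le, Complex.ofReal_sub, Complex.ofReal_one]
  have hre : ((t : ℂ) + (κ + Complex.I * lam)).re = t + κ := by simp
  have him : ((t : ℂ) + (κ + Complex.I * lam)).im = lam := by simp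
  have hkernel : (Complex.I * lam * ((t : ℂ) + (κ + Complex.I * lam))⁻¹).re =
      lam ^ 2 / ((t + κ) ^ 2 + lam ^ 2) := by
    rw [mul_assoc, Complex.I_mul_re, Complex.im_ofReal_mul, Complex.inv_im, Complex.normSq_apply,
      hre, him]
    ring
  rw [hpow, smul_eq_mul, ← mul_assoc, Complex.re_mul_ofReal, hkernel]
  ring

lemma integrableOn_inv_add_smul_cpow (hα0 : 0 < α) (hα1 : α < 1) (hlam : lam ≠ 0) :
    IntegrableOn (fun t : ℝ ↦ ((t : ℂ) + (κ + Complex.I * lam))⁻¹ • (t : ℂ) ^ ((α : ℂ) - 1))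
      (Set.Ioi 0) :=
  integrableOn_inv_ofReal_add_smul
    (integrableOn_inv_ofReal_add_one_smul_cpow (by simpa using hα0) (by simpa using hα1))
    (ofReal_add_I_mul_mem_slitPlane κ hlam)

lemma integrableOn_rpow_div_add_sq_add_sq (hα0 : 0 < α) (hα1 : α < 1) (hlam : lam ≠ 0) :
    IntegrableOn (fun t : ℝ ↦ t ^ (α - 1) / ((t + κ) ^ 2 + lam ^ 2)) (Set.Ioi 0) := by
  have hre := ((integrableOn_inv_add_smul_cpow κ hα0 hα1 hlam).const_mul (Complex.I * lam)).re
  refine IntegrableOn.congr_fun (hre.const_mul (lam ^ 2)⁻¹) (fun t (ht : 0 < t) ↦ ?_)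
    measurableSet_Ioi
  simp only [RCLike.re_eq_complex_re, re_I_mul_mul_inv_add_smul_cpow κ ht]
  field_simp

theorem re_I_mul_mul_cpow (hα0 : 0 < α) (hα1 : α < 1) (hlam : lam ≠ 0) :
    (Complex.I * lam * ((κ : ℂ) + Complex.I * lam) ^ ((α : ℂ) - 1)).re =
      sin (α * π) / π * lam ^ 2 *
        ∫ t in Set.Ioi (0 : ℝ), t ^ (α - 1) / ((t + κ) ^ 2 + lam ^ 2) := by
  have hsin : sin (α * π) ≠ 0 :=
    (sin_pos_of_pos_of_lt_pi (by positivity) (mul_lt_of_lt_one_left pi_pos hα1)).ne'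
  have hsinC : Complex.sin (α * π) ≠ 0 := by exact_mod_cast hsin
  have hcpow : ((κ : ℂ) + Complex.I * lam) ^ ((α : ℂ) - 1) = (sin (α * π) / π : ℝ) *
      stieltjesTransform (fun t : ℝ ↦ (t : ℂ) ^ ((α : ℂ) - 1)) (κ + Complex.I * lam) := by
    rw [stieltjesTransform_cpow (by simpa using hα0) (by simpa using hα1)
      (ofReal_add_I_mul_mem_slitPlane κ hlam), mul_comm (π : ℂ)]
    push_cast
    field_simp
  have hint := (integrableOn_inv_add_smul_cpow κ hα0 hα1 hlam).const_mul (Complex.I * lam)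
  calc (Complex.I * lam * ((κ : ℂ) + Complex.I * lam) ^ ((α : ℂ) - 1)).re
      = sin (α * π) / π * (∫ t in Set.Ioi (0 : ℝ), Complex.I * lam *
          (((t : ℂ) + (κ + Complex.I * lam))⁻¹ • (t : ℂ) ^ ((α : ℂ) - 1))).re := by
        rw [hcpow, mul_left_comm, Complex.re_ofReal_mul, integral_const_mul, stieltjesTransform]
    _ = sin (α * π) / π *
          ∫ t in Set.Ioi (0 : ℝ), lam ^ 2 * (t ^ (α - 1) / ((t + κ) ^ 2 + lam ^ 2)) := by
        rw [← RCLike.re_eq_complex_re, ← integral_re hint]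
        congr 1
        exact setIntegral_congr_fun measurableSet_Ioi fun t ht ↦
          re_I_mul_mul_inv_add_smul_cpow κ ht
    _ = _ := by
        rw [integral_const_mul, mul_assoc]

end RealPart

lemma integral_abs_rpow_mul_comp_sq (α : ℝ) (g : ℝ → ℝ) :
    ∫ y : ℝ, |y| ^ (2 * α - 1) * g (y ^ 2) = ∫ t in Set.Ioi (0 : ℝ), t ^ (α - 1) * g t := by
  have heven := integral_comp_abs (f := fun y : ℝ ↦ y ^ (2 * α - 1) * g (y ^ 2))
  simp only [sq_abs] at heven
  rw [heven, ← integral_comp_rpow_Ioi_of_pos (g := fun t ↦ t ^ (α - 1) * g t) two_pos,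
    ← integral_const_mul]
  refine setIntegral_congr_fun measurableSet_Ioi fun y (hy : 0 < y) ↦ ?_
  have hpow : y ^ (2 * α - 1) = y ^ ((2 : ℝ) - 1) * (y ^ (2 : ℝ)) ^ (α - 1) := by
    rw [← rpow_mul hy.le, ← rpow_add hy]
    ring_nf
  simp only [smul_eq_mul, hpow, rpow_two]
  ring

lemma setIntegral_pos_of_forall_pos {X : Type*} [MeasurableSpace X] {μ : Measure X} {s : Set X}
    {f : X → ℝ} (hs : MeasurableSet s) (hμs : 0 < μ s) (hf : IntegrableOn f s μ)
    (hpos : ∀ x ∈ s, 0 < f x) : 0 < ∫ x in s, f x ∂μ := by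
  have hnonneg : 0 ≤ᵐ[μ.restrict s] f :=
    (ae_restrict_mem hs).mono fun x hx ↦ (hpos x hx).le
  have hsupport : s ⊆ Function.support f ∩ s := fun x hx ↦ ⟨(hpos x hx).ne', hx⟩
  exact (setIntegral_pos_iff_support_of_nonneg_ae hnonneg hf).2
    (hμs.trans_le (measure_mono hsupport))

theorem stmt6_general (α κ lam : ℝ) (hα0 : 0 < α) (hα1 : α < 1) (hlam : lam ≠ 0) :
    (Complex.I * (lam : ℂ) * ((κ : ℂ) + Complex.I * (lam : ℂ)) ^ ((α : ℂ) - 1)).re =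
      (Real.sin (α * π) / π) * lam ^ 2 *
        ∫ y : ℝ, |y| ^ (2 * α - 1) / ((y ^ 2 + κ) ^ 2 + lam ^ 2) ∧
    0 < (Complex.I * (lam : ℂ) * ((κ : ℂ) + Complex.I * (lam : ℂ)) ^ ((α : ℂ) - 1)).re := by
  have hsubst : ∫ y : ℝ, |y| ^ (2 * α - 1) / ((y ^ 2 + κ) ^ 2 + lam ^ 2) =
      ∫ t in Set.Ioi (0 : ℝ), t ^ (α - 1) / ((t + κ) ^ 2 + lam ^ 2) :=
    integral_abs_rpow_mul_comp_sq α fun t ↦ ((t + κ) ^ 2 + lam ^ 2)⁻¹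
  have hintegral : 0 < ∫ t in Set.Ioi (0 : ℝ), t ^ (α - 1) / ((t + κ) ^ 2 + lam ^ 2) := by
    refine setIntegral_pos_of_forall_pos measurableSet_Ioi (by simp)
      (integrableOn_rpow_div_add_sq_add_sq κ hα0 hα1 hlam) fun t (ht : 0 < t) ↦ ?_
    positivity
  have hsin : 0 < sin (α * π) :=
    sin_pos_of_pos_of_lt_pi (by positivity) (mul_lt_of_lt_one_left pi_pos hα1)
  rw [hsubst, re_I_mul_mul_cpow κ hα0 hα1 hlam]
  exact ⟨rfl, by positivity⟩

/-- the real part of the fractional damping symbol: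
`Re(iλ (κ + iλ)^(α-1)) = (sin(απ)/π) λ² ∫_ℝ |y|^(2α-1)/((y²+κ)²+λ²) dy > 0`. -/
theorem stmt6 (α κ lam : ℝ) (hα0 : 0 < α) (hα1 : α < 1) (hκ : 0 ≤ κ) (hlam : lam ≠ 0) :
    (Complex.I * (lam : ℂ) * ((κ : ℂ) + Complex.I * (lam : ℂ)) ^ ((α : ℂ) - 1)).re =
      (Real.sin (α * π) / π) * lam ^ 2 *
        ∫ y : ℝ, |y| ^ (2 * α - 1) / ((y ^ 2 + κ) ^ 2 + lam ^ 2) ∧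
    0 < (Complex.I * (lam : ℂ) * ((κ : ℂ) + Complex.I * (lam : ℂ)) ^ ((α : ℂ) - 1)).re :=
  stmt6_general α κ lam hα0 hα1 hlam
end

section
/- Let ρ_z, ρ_u, a₁, a₃ > 0, a₂ ∈ ℝ with a₂ ≠ 0 and a₁a₃ > a₂², γ > 0, κ ≥ 0, 0 < α < 1. Set m = a₁/ρ_z + a₃/ρ_u, q = (a₁a₃ − a₂²)/(ρ_z ρ_u), D = (a₁/ρ_z − a₃/ρ_u)² + 4a₂²/(ρ_z ρ_u), and let l ∈ {l_+, l_−} with l_± = √((m ± √D)/2). Let (μ_n) be positive reals with μ_n → ∞ and let (λ_n) be complex numbers satisfying λ_n⁴ + m μ_n² λ_n² + (γ/ρ_z) λ_n³ (λ_n + κ)^{α−1} + (γ/ρ_z)(a₃/ρ_u) μ_n² λ_n (λ_n + κ)^{α−1} + q μ_n⁴ = 0 for every n (principal branch powers), and suppose λ_n/(i μ_n) → l. Then μ_n^{1−α} (λ_n − i l μ_n) → −e^{i(α−1)π/2} · ((l² − a₃/ρ_u)/(4l² − 2m)) · (γ/ρ_z) · l^{α−1}. In particular μ_n^{1−α} Re(λ_n)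 → β, where β = −((l² − a₃/ρ_u)/(4l² − 2m)) · (γ/(ρ_z l^{1−α})) · cos((1−α)π/2), and β < 0. -/
/-!
Put `λₙ = i μₙ wₙ`, so that `wₙ → l`. Since `(l² - A)(l² - b) = c` for `A = a₁/ρz`, `b = a₃/ρu`,
`c = a₂²/(ρz ρu)`, the undamped part of the characteristic equation is
`μₙ⁴ (wₙ - l)(wₙ + l)(wₙ² + l² - A - b)`, and the equation can be solved for `λₙ - i l μₙ` in terms
of the damping coefficient `dₙ = (γ/ρz)(λₙ + κ)^(α-1)` and of the convergent sequence `wₙ`.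
Homogeneity of the principal power gives `μₙ^(1-α) (λₙ + κ)^(α-1) = ((λₙ + κ)/μₙ)^(α-1)`, which
tends to `(i l)^(α-1)` because `i l` lies off the branch cut.

The denominator is nonzero and `β < 0` because `l² - A` and `l² - b`, having a positive product,
share their sign with their sum `2l² - A - b`.
-/

open Real Filter

section WaveSpeed

variable {A b c : ℝ}

lemma sqrt_sq_sub_add_lt_add (hA : 0 < A) (hb : 0 < b) (hc : c < A * b) :
    √((A - b) ^ 2 + 4 * c) < A + b :=
  (sqrt_lt' (by positivity)).2 (by linarith [sq_nonneg (A + b)])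

lemma sq_sqrt_sub_mul_sq_sqrt_sub {d : ℝ} (hd : d ^ 2 = (A - b) ^ 2 + 4 * c)
    (h : 0 ≤ A + b + d) :
    (√((A + b + d) / 2) ^ 2 - A) * (√((A + b + d) / 2) ^ 2 - b) = c := by
  rw [sq_sqrt (by positivity)]
  linear_combination hd / 4

lemma pos_and_sq_sub_mul_sq_sub_eq {l : ℝ} (hA : 0 < A) (hb : 0 < b) (hc : 0 ≤ c)
    (hcA : c < A * b)
    (hl : l = √((A + b + √((A - b) ^ 2 + 4 * c)) / 2) ∨
      l = √((A + b - √((A - b) ^ 2 + 4 * c)) / 2)) :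
    0 < l ∧ (l ^ 2 - A) * (l ^ 2 - b) = c := by
  have hd : √((A - b) ^ 2 + 4 * c) ^ 2 = (A - b) ^ 2 + 4 * c := sq_sqrt (by positivity)
  have hlt := sqrt_sq_sub_add_lt_add hA hb hcA
  rcases hl with rfl | rfl
  · exact ⟨by positivity, sq_sqrt_sub_mul_sq_sqrt_sub hd (by positivity)⟩
  · rw [sub_eq_add_neg (A + b)]
    exact ⟨sqrt_pos.2 (by linarith), sq_sqrt_sub_mul_sq_sqrt_sub (by rwa [neg_sq]) (by linarith)⟩

end WaveSpeed

lemma sub_div_four_mul_sub_pos {K : Type*} [Field K] [LinearOrder K] [IsStrictOrderedRing K]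
    {A b x : K} (h : 0 < (x - A) * (x - b)) : 0 < (x - b) / (4 * x - 2 * (A + b)) := by
  have hsum : 4 * x - 2 * (A + b) = 2 * ((x - A) + (x - b)) := by ring
  rw [hsum]
  rcases mul_pos_iff.1 h with ⟨hA, hb⟩ | ⟨hA, hb⟩
  · positivity
  · exact div_pos_of_neg_of_neg hb (by linarith)

section PrincipalPower

variable {r : ℝ}

lemma ofReal_mul_cpow (hr : 0 < r) (z s : ℂ) : ((r : ℂ) * z) ^ s = (r : ℂ) ^ s * z ^ s := by
  have hr' : (r : ℂ) ≠ 0 := mod_cast hr.ne'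
  rcases eq_or_ne z 0 with rfl | hz
  · rcases eq_or_ne s 0 with rfl | hs <;> simp [*]
  · rw [Complex.cpow_def_of_ne_zero (mul_ne_zero hr' hz), Complex.cpow_def_of_ne_zero hr',
      Complex.cpow_def_of_ne_zero hz, Complex.log_ofReal_mul hr hz, Complex.ofReal_log hr.le,
      add_mul, Complex.exp_add]

lemma ofReal_cpow_neg_mul_cpow (hr : 0 < r) (z s : ℂ) :
    (r : ℂ) ^ (-s) * z ^ s = (z / r) ^ s := by
  have hr' : (r : ℂ) ≠ 0 := mod_cast hr.ne'
  calc (r : ℂ) ^ (-s) * z ^ s = ((r : ℂ) ^ s)⁻¹ * ((r : ℂ) * (z / r)) ^ s := by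
        rw [Complex.cpow_neg, mul_div_cancel₀ z hr']
    _ = (z / r) ^ s := by
        rw [ofReal_mul_cpow hr, inv_mul_cancel_left₀ (by simp [Complex.cpow_eq_zero_iff, hr'])]

lemma I_mul_ofReal_cpow (hr : 0 < r) (s : ℂ) :
    (Complex.I * r) ^ s = Complex.exp (Complex.I * s * π / 2) * (r : ℂ) ^ s := by
  rw [mul_comm Complex.I, ofReal_mul_cpow hr, Complex.cpow_def_of_ne_zero Complex.I_ne_zero,
    Complex.log_I, mul_comm]
  ring_nf

lemma re_neg_exp_I_mul_mul_ofReal (α k : ℝ) :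
    (-Complex.exp (Complex.I * ((α : ℂ) - 1) * π / 2) * k).re =
      -(k * cos ((1 - α) * π / 2)) := by
  have harg : Complex.I * ((α : ℂ) - 1) * π / 2 =
      ((-((1 - α) * π / 2) : ℝ) : ℂ) * Complex.I := by
    push_cast
    ring
  rw [Complex.re_mul_ofReal, Complex.neg_re, harg, Complex.exp_ofReal_mul_I_re, cos_neg]
  ring

variable {ι : Type*} {F : Filter ι} {μ : ι → ℝ} {z : ι → ℂ}

lemma tendsto_ofReal_cpow_neg_mul_cpow {ζ : ℂ} (s : ℂ) (hμ : ∀ᶠ n in F, 0 < μ n)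
    (hz : Tendsto (fun n => z n / μ n) F (nhds ζ)) (hζ : ζ ∈ Complex.slitPlane) :
    Tendsto (fun n => (μ n : ℂ) ^ (-s) * z n ^ s) F (nhds (ζ ^ s)) :=
  (hz.cpow tendsto_const_nhds hζ).congr' <| by
    filter_upwards [hμ] with n hn using (ofReal_cpow_neg_mul_cpow hn (z n) s).symm

end PrincipalPower

/-- The characteristic function at `z` of the damped system on a mode of frequency `μ`, with
`A = a₁/ρz`, `b = a₃/ρu`, `c = a₂²/(ρz ρu)`. The coefficient `d` stands for `(γ/ρz)(z + κ)^(α-1)`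
and is left free, so that the perturbation argument does not depend on the kind of damping. -/
def dampedCharFun (A b c d μ z : ℂ) : ℂ :=
  (z ^ 2 + A * μ ^ 2) * (z ^ 2 + b * μ ^ 2) - c * μ ^ 4 + d * z * (z ^ 2 + b * μ ^ 2)

section Asymptotics

lemma sub_mul_eq_of_dampedCharFun_eq_zero {A b c d l μ w : ℂ} (hμ : μ ≠ 0)
    (hroot : (l ^ 2 - A) * (l ^ 2 - b) = c)
    (hchar : dampedCharFun A b c d μ (Complex.I * μ * w) = 0) :
    (Complex.I * μ * w - Complex.I * l * μ) * ((w + l) * (w ^ 2 + l ^ 2 - (A + b))) =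
      -(d * (w * (w ^ 2 - b))) := by
  have hsq : (Complex.I * μ * w) ^ 2 = -(μ ^ 2 * w ^ 2) := by
    rw [mul_pow, mul_pow, Complex.I_sq]
    ring
  rw [dampedCharFun, hsq] at hchar
  have hfactor : μ * ((w - l) * ((w + l) * (w ^ 2 + l ^ 2 - (A + b)))) =
      Complex.I * (d * (w * (w ^ 2 - b))) := by
    apply mul_left_cancel₀ (pow_ne_zero 3 hμ)
    linear_combination hchar - μ ^ 4 * hroot
  linear_combination Complex.I * hfactor + d * (w * (w ^ 2 - b)) * Complex.I_sq

variable {ι : Type*} {F : Filter ι} {z : ι → ℂ}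

lemma tendsto_mul_sub_of_dampedCharFun_eq_zero {A b c l δ : ℂ} {μ d R : ι → ℂ} (hl : l ≠ 0)
    (hroot : (l ^ 2 - A) * (l ^ 2 - b) = c) (hsimple : 4 * l ^ 2 - 2 * (A + b) ≠ 0)
    (hμ : ∀ᶠ n in F, μ n ≠ 0) (hchar : ∀ᶠ n in F, dampedCharFun A b c (d n) (μ n) (z n) = 0)
    (hlim : Tendsto (fun n => z n / (Complex.I * μ n)) F (nhds l))
    (hd : Tendsto (fun n => R n * d n) F (nhds δ)) :
    Tendsto (fun n => R n * (z n - Complex.I * l * μ n)) F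
      (nhds (-(δ * ((l ^ 2 - b) / (4 * l ^ 2 - 2 * (A + b)))))) := by
  set w : ι → ℂ := fun n => z n / (Complex.I * μ n)
  have hden : Tendsto (fun n => (w n + l) * (w n ^ 2 + l ^ 2 - (A + b))) F
      (nhds (l * (4 * l ^ 2 - 2 * (A + b)))) := by
    convert (hlim.add_const l).mul (((hlim.pow 2).add_const (l ^ 2)).sub_const (A + b)) using 2
    ring
  have hden_ne : l * (4 * l ^ 2 - 2 * (A + b)) ≠ 0 := mul_ne_zero hl hsimple
  have hquot := (hd.mul (hlim.mul ((hlim.pow 2).sub_const b))).neg.div hden hden_ne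
  have hvalue : -(δ * (l * (l ^ 2 - b))) / (l * (4 * l ^ 2 - 2 * (A + b))) =
      -(δ * ((l ^ 2 - b) / (4 * l ^ 2 - 2 * (A + b)))) := by
    rw [neg_div, mul_div_assoc, mul_div_mul_left _ _ hl]
  rw [hvalue] at hquot
  refine hquot.congr' ?_
  filter_upwards [hμ, hchar, hden.eventually_ne hden_ne] with n hμn hcharn hdenn
  have hz : Complex.I * μ n * w n = z n :=
    mul_div_cancel₀ (z n) (mul_ne_zero Complex.I_ne_zero hμn)
  have hsolve := sub_mul_eq_of_dampedCharFun_eq_zero hμn hroot (hz.symm ▸ hcharn)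
  rw [hz] at hsolve
  rw [Pi.div_apply, div_eq_iff hdenn]
  linear_combination -R n * hsolve

lemma tendsto_add_const_div_of_tendsto_div_I_mul {μ : ι → ℝ} {l : ℂ} (κ : ℂ)
    (hμ : Tendsto μ F atTop)
    (hz : Tendsto (fun n => z n / (Complex.I * μ n)) F (nhds l)) :
    Tendsto (fun n => (z n + κ) / μ n) F (nhds (Complex.I * l)) := by
  have hinv : Tendsto (fun n => ((μ n)⁻¹ : ℂ)) F (nhds 0) := by
    simpa using (tendsto_inv_atTop_zero.comp hμ).ofReal
  have hsum := (hz.const_mul Complex.I).add (hinv.const_mul κ)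
  rw [mul_zero, add_zero] at hsum
  refine hsum.congr fun n => ?_
  rw [mul_div_assoc', mul_div_mul_left _ _ Complex.I_ne_zero, add_div, div_eq_mul_inv κ]

lemma tendsto_rpow_mul_sub_of_dampedCharFun_eq_zero {A b c g l α : ℝ} {κ : ℂ} {μ : ι → ℝ}
    (hl : 0 < l) (hroot : (l ^ 2 - A) * (l ^ 2 - b) = c)
    (hsimple : 4 * l ^ 2 - 2 * (A + b) ≠ 0) (hμ : Tendsto μ F atTop)
    (hchar : ∀ᶠ n in F,
      dampedCharFun A b c (g * (z n + κ) ^ ((α : ℂ) - 1)) (μ n) (z n) = 0)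
    (hlim : Tendsto (fun n => z n / (Complex.I * μ n)) F (nhds (l : ℂ))) :
    Tendsto (fun n => (((μ n) ^ (1 - α) : ℝ) : ℂ) * (z n - Complex.I * l * μ n)) F
      (nhds (-Complex.exp (Complex.I * ((α : ℂ) - 1) * π / 2) *
        (((l ^ 2 - b) / (4 * l ^ 2 - 2 * (A + b)) * g * l ^ (α - 1) : ℝ) : ℂ))) := by
  have hμpos : ∀ᶠ n in F, 0 < μ n := hμ.eventually_gt_atTop 0
  have hslit : Complex.I * (l : ℂ) ∈ Complex.slitPlane :=
    Complex.mem_slitPlane_iff.2 (.inr (by simpa using hl.ne'))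
  have hpow := tendsto_ofReal_cpow_neg_mul_cpow ((α : ℂ) - 1) hμpos
    (tendsto_add_const_div_of_tendsto_div_I_mul κ hμ hlim) hslit
  have hdamping : Tendsto
      (fun n => (((μ n) ^ (1 - α) : ℝ) : ℂ) * (g * (z n + κ) ^ ((α : ℂ) - 1))) F
      (nhds (g * (Complex.I * l) ^ ((α : ℂ) - 1))) := by
    refine (hpow.const_mul (g : ℂ)).congr' ?_
    filter_upwards [hμpos] with n hn
    rw [Complex.ofReal_cpow hn.le, Complex.ofReal_sub, Complex.ofReal_one, neg_sub]
    ring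
  convert tendsto_mul_sub_of_dampedCharFun_eq_zero (mod_cast hl.ne') (mod_cast hroot)
    (mod_cast hsimple) (hμpos.mono fun n hn => mod_cast hn.ne') hchar hlim hdamping using 2
  rw [I_mul_ofReal_cpow hl]
  push_cast [Complex.ofReal_cpow hl.le]
  ring

end Asymptotics

theorem stmt11_general {ι : Type*} {F : Filter ι} (ρz ρu a₁ a₂ a₃ γ α : ℝ) (κ : ℂ)
    (hρz : 0 < ρz) (hρu : 0 < ρu) (ha₁ : 0 < a₁) (ha₃ : 0 < a₃) (ha₂ : a₂ ≠ 0)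
    (hA : a₂ ^ 2 < a₁ * a₃) (hγ : 0 < γ) (hα0 : 0 < α) (hα2 : α < 2) (l : ℝ)
    (hl : l = √(((a₁ / ρz + a₃ / ρu) +
            √((a₁ / ρz - a₃ / ρu) ^ 2 + 4 * a₂ ^ 2 / (ρz * ρu))) / 2) ∨
          l = √(((a₁ / ρz + a₃ / ρu) -
            √((a₁ / ρz - a₃ / ρu) ^ 2 + 4 * a₂ ^ 2 / (ρz * ρu))) / 2))
    (μ : ι → ℝ) (hμ : Tendsto μ F atTop) (lam : ι → ℂ)
    (hchar : ∀ᶠ n in F, lam n ^ 4 +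
        ((a₁ / ρz + a₃ / ρu : ℝ) : ℂ) * (μ n : ℂ) ^ 2 * lam n ^ 2 +
        ((γ / ρz : ℝ) : ℂ) * lam n ^ 3 * (lam n + κ) ^ ((α : ℂ) - 1) +
        ((γ / ρz * (a₃ / ρu) : ℝ) : ℂ) * (μ n : ℂ) ^ 2 * lam n *
          (lam n + κ) ^ ((α : ℂ) - 1) +
        (((a₁ * a₃ - a₂ ^ 2) / (ρz * ρu) : ℝ) : ℂ) * (μ n : ℂ) ^ 4 = 0)
    (hlim : Tendsto (fun n => lam n / (Complex.I * (μ n : ℂ))) F (nhds (l : ℂ))) :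
    Tendsto (fun n => (((μ n) ^ (1 - α) : ℝ) : ℂ) *
        (lam n - Complex.I * (l : ℂ) * (μ n : ℂ))) F
      (nhds (-Complex.exp (Complex.I * ((α : ℂ) - 1) * (π : ℂ) / 2) *
        ((((l ^ 2 - a₃ / ρu) / (4 * l ^ 2 - 2 * (a₁ / ρz + a₃ / ρu))) *
          (γ / ρz) * l ^ (α - 1) : ℝ) : ℂ))) ∧
    Tendsto (fun n => (μ n) ^ (1 - α) * (lam n).re) F
      (nhds (-((l ^ 2 - a₃ / ρu) / (4 * l ^ 2 - 2 * (a₁ / ρz + a₃ / ρu))) *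
        (γ / (ρz * l ^ (1 - α))) * cos ((1 - α) * π / 2))) ∧
    -((l ^ 2 - a₃ / ρu) / (4 * l ^ 2 - 2 * (a₁ / ρz + a₃ / ρu))) *
        (γ / (ρz * l ^ (1 - α))) * cos ((1 - α) * π / 2) < 0 := by
  have hc : 0 < a₂ ^ 2 / (ρz * ρu) := by positivity
  have hcA : a₂ ^ 2 / (ρz * ρu) < a₁ / ρz * (a₃ / ρu) := by
    rw [div_mul_div_comm]
    gcongr
  rw [mul_div_assoc] at hl
  obtain ⟨hl0, hroot⟩ :=
    pos_and_sq_sub_mul_sq_sub_eq (div_pos ha₁ hρz) (div_pos ha₃ hρu) hc.le hcA hl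
  have hratio := sub_div_four_mul_sub_pos (hroot ▸ hc)
  have hmain := tendsto_rpow_mul_sub_of_dampedCharFun_eq_zero (g := γ / ρz) hl0 hroot
    (div_ne_zero_iff.1 hratio.ne').2 hμ (hchar.mono fun n hn => by
      rw [← hn, dampedCharFun, sub_div, ← div_mul_div_comm]
      push_cast
      ring) hlim
  refine ⟨hmain, ?_, ?_⟩
  · convert (Complex.continuous_re.tendsto _).comp hmain using 2
    · simp
    · rw [re_neg_exp_I_mul_mul_ofReal, ← neg_sub 1 α, rpow_neg hl0.le, ← div_div γ]
      ring
  · have hcos : 0 < cos ((1 - α) * π / 2) :=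
      cos_pos_of_mem_Ioo ⟨by nlinarith [pi_pos], by nlinarith [pi_pos]⟩
    rw [neg_mul, neg_mul, neg_lt_zero]
    positivity

/-- Lemma 4.4 of the paper: asymptotic expansion of the large eigenvalues.
If `λₙ` solves the characteristic equation (4.9) and `λₙ/(iμₙ) → l ∈ {l₊, l₋}`, then
`μₙ^(1-α)(λₙ - i l μₙ) → -e^{i(α-1)π/2} ((l² - a₃/ρu)/(4l² - 2m)) (γ/ρz) l^(α-1)`,
and in particular `μₙ^(1-α) Re λₙ → β < 0`. -/
theorem stmt11 (ρz ρu a₁ a₂ a₃ γ κ α : ℝ) (hρz : 0 < ρz) (hρu : 0 < ρu)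
    (ha₁ : 0 < a₁) (ha₃ : 0 < a₃) (ha₂ : a₂ ≠ 0) (hA : a₂ ^ 2 < a₁ * a₃)
    (hγ : 0 < γ) (hκ : 0 ≤ κ) (hα0 : 0 < α) (hα1 : α < 1)
    (l : ℝ)
    (hl : l = Real.sqrt (((a₁ / ρz + a₃ / ρu) +
            Real.sqrt ((a₁ / ρz - a₃ / ρu) ^ 2 + 4 * a₂ ^ 2 / (ρz * ρu))) / 2) ∨
          l = Real.sqrt (((a₁ / ρz + a₃ / ρu) -
            Real.sqrt ((a₁ / ρz - a₃ / ρu) ^ 2 + 4 * a₂ ^ 2 / (ρz * ρu))) / 2))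
    (μ : ℕ → ℝ) (hμpos : ∀ n, 0 < μ n) (hμ : Tendsto μ atTop atTop)
    (lam : ℕ → ℂ)
    (hchar : ∀ n, lam n ^ 4 +
        ((a₁ / ρz + a₃ / ρu : ℝ) : ℂ) * ((μ n : ℝ) : ℂ) ^ 2 * lam n ^ 2 +
        ((γ / ρz : ℝ) : ℂ) * lam n ^ 3 * (lam n + (κ : ℂ)) ^ ((α : ℂ) - 1) +
        ((γ / ρz * (a₃ / ρu) : ℝ) : ℂ) * ((μ n : ℝ) : ℂ) ^ 2 * lam n *
          (lam n + (κ : ℂ)) ^ ((α : ℂ) - 1) +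
        (((a₁ * a₃ - a₂ ^ 2) / (ρz * ρu) : ℝ) : ℂ) * ((μ n : ℝ) : ℂ) ^ 4 = 0)
    (hlim : Tendsto (fun n => lam n / (Complex.I * ((μ n : ℝ) : ℂ))) atTop
      (nhds (l : ℂ))) :
    Tendsto (fun n => (((μ n) ^ (1 - α) : ℝ) : ℂ) *
        (lam n - Complex.I * (l : ℂ) * ((μ n : ℝ) : ℂ))) atTop
      (nhds (-Complex.exp (Complex.I * ((α : ℂ) - 1) * (π : ℂ) / 2) *
        ((((l ^ 2 - a₃ / ρu) / (4 * l ^ 2 - 2 * (a₁ / ρz + a₃ / ρu))) *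
          (γ / ρz) * l ^ (α - 1) : ℝ) : ℂ))) ∧
    Tendsto (fun n => (μ n) ^ (1 - α) * (lam n).re) atTop
      (nhds (-((l ^ 2 - a₃ / ρu) / (4 * l ^ 2 - 2 * (a₁ / ρz + a₃ / ρu))) *
        (γ / (ρz * l ^ (1 - α))) * Real.cos ((1 - α) * π / 2))) ∧
    -((l ^ 2 - a₃ / ρu) / (4 * l ^ 2 - 2 * (a₁ / ρz + a₃ / ρu))) *
        (γ / (ρz * l ^ (1 - α))) * Real.cos ((1 - α) * π / 2) < 0 :=
  stmt11_general ρz ρu a₁ a₂ a₃ γ α κ hρz hρu ha₁ ha₃ ha₂ hA hγ hα0 (by linarith) l hl μ hμ lam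
    (.of_forall hchar) hlim
end

section
/- Let L > 0, 0 < α < 1, κ ≥ 0, γ > 0, let ρ_z, ρ_u, a₁, a₃ > 0 and a₂ ∈ ℝ with a₂ ≠ 0 and a₁a₃ ≥ a₂², and let λ ∈ ℝ with λ ≠ 0. Suppose z, u : [0,L] → ℂ are twice continuously differentiable, satisfy z(0) = z(L) = u(0) = u(L) = 0, and solve −ρ_z λ² z(x) − a₁ z″(x) − a₂ u″(x) + γ iλ (κ + iλ)^{α−1} z(x) = 0 and −ρ_u λ² u(x) − a₃ u″(x) − a₂ z″(x) = 0 for all x ∈ (0,L), where the complex power denotes the principal branch. Then z ≡ 0 and u ≡ 0 on [0,L]. -/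
open Real

/-!
The damping coefficient `c = -ρz λ² + γ iλ (κ + iλ)^(α-1)` has
`Im c = γ λ Re ((κ + iλ)^(α-1)) ≠ 0`, because `|arg (κ + iλ)| ≤ π/2` and `|α - 1| < 1`. The elastic
operator `(z, u) ↦ (a₁ z'' + a₂ u'', a₂ z'' + a₃ u'')` is symmetric under Dirichlet conditions, so
pairing the system with `(z, u)` and taking imaginary parts leaves only `Im c ∫ |z|² = 0`, whence
`z = 0`. The coupling carries this over to `u`: the first equation becomes `a₂ u'' = 0`, and then
the second one `ρu λ² u = 0`.
-/

open Set

lemma re_cpow_ofReal_pos {s : ℂ} (hs : s ≠ 0) (hre : 0 ≤ s.re) {r : ℝ} (hr : |r| < 1) :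
    0 < (s ^ (r : ℂ)).re := by
  have harg : |s.arg| ≤ π / 2 := Complex.abs_arg_le_pi_div_two_iff.2 hre
  have hangle : |s.arg * r| < π / 2 := by
    rw [abs_mul]
    nlinarith [pi_pos, abs_nonneg r]
  rw [Complex.cpow_ofReal_re]
  exact mul_pos (rpow_pos_of_pos (norm_pos_iff.2 hs) r) (cos_pos_of_mem_Ioo (abs_lt.1 hangle))

lemma re_add_I_mul_cpow_sub_one_pos {α κ lam : ℝ} (hα0 : 0 < α) (hα2 : α < 2) (hκ : 0 ≤ κ)
    (hlam : lam ≠ 0) :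
    0 < (((κ : ℂ) + Complex.I * (lam : ℂ)) ^ ((α : ℂ) - 1)).re := by
  have hs : (κ : ℂ) + Complex.I * (lam : ℂ) ≠ 0 :=
    fun h ↦ hlam (by simpa using congrArg Complex.im h)
  have hα : |α - 1| < 1 := abs_lt.2 ⟨by linarith, by linarith⟩
  exact_mod_cast re_cpow_ofReal_pos hs (by simpa using hκ) hα

section IteratedDerivWithin

variable {𝕜 F G : Type*} [NontriviallyNormedField 𝕜] [NormedAddCommGroup F] [NormedSpace 𝕜 F]
  [NormedAddCommGroup G] [NormedSpace 𝕜 G] {n : ℕ} {f : 𝕜 → F} {s : Set 𝕜} {x : 𝕜}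

lemma iteratedDerivWithin_continuousLinearMap_comp (g : F →L[𝕜] G) (hf : ContDiffWithinAt 𝕜 n f s x)
    (hs : UniqueDiffOn 𝕜 s) (hx : x ∈ s) :
    iteratedDerivWithin n (fun y ↦ g (f y)) s x = g (iteratedDerivWithin n f s x) :=
  congrArg (fun m ↦ m fun _ ↦ 1) (g.iteratedFDerivWithin_comp_left hf hs hx le_rfl)

lemma hasDerivAt_iteratedDerivWithin (hf : ContDiffOn 𝕜 (n + 1) f s) (hs : UniqueDiffOn 𝕜 s)
    (hx : s ∈ nhds x) :
    HasDerivAt (iteratedDerivWithin n f s) (iteratedDerivWithin (n + 1) f s x) x := by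
  have hdiff : DifferentiableOn 𝕜 (iteratedDerivWithin n f s) s :=
    hf.differentiableOn_iteratedDerivWithin (mod_cast n.lt_succ_self) hs
  rw [iteratedDerivWithin_succ]
  exact (hdiff x (mem_of_mem_nhds hx)).hasDerivWithinAt.hasDerivAt hx

end IteratedDerivWithin

section Energy

variable {a b : ℝ}

lemma eqOn_zero_of_integral_norm_sq_eq_zero {E : Type*} [NormedAddCommGroup E] {f : ℝ → E}
    (hab : a < b) (hf : ContinuousOn f (Icc a b)) (hint : ∫ x in a..b, ‖f x‖ ^ 2 = 0) :
    EqOn f 0 (Icc a b) := by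
  intro x hx
  by_contra hfx
  have hpos : 0 < ‖f x‖ ^ 2 := pow_pos (norm_pos_iff.2 hfx) 2
  exact (intervalIntegral.integral_pos hab (hf.norm.pow 2) (fun _ _ ↦ sq_nonneg _)
    ⟨x, hx, hpos⟩).ne' hint

open scoped InnerProductSpace in
lemma hasDerivAt_im_inner_of_isSymmetric {E : Type*} [NormedAddCommGroup E]
    [InnerProductSpace ℂ E] {A : E →L[ℂ] E} (hA : A.toLinearMap.IsSymmetric) {w v : ℝ → E} {v' : E}
    {x : ℝ} (hw : HasDerivAt w (v x) x) (hv : HasDerivAt v v' x) :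
    HasDerivAt (fun t ↦ (⟪w t, A (v t)⟫_ℂ).im) (⟪w x, A v'⟫_ℂ).im x := by
  have hAv : HasDerivAt (fun t ↦ A (v t)) (A v') x :=
    (A.restrictScalars ℝ).hasFDerivAt.comp_hasDerivAt x hv
  have hreal : (⟪v x, A (v x)⟫_ℂ).im = 0 := hA.im_inner_self_apply (v x)
  have hflux := Complex.imCLM.hasFDerivAt.comp_hasDerivAt x (hw.inner ℂ hAv)
  refine hflux.congr_deriv ?_
  rw [Complex.imCLM_apply, Complex.add_im, hreal, add_zero]

open scoped InnerProductSpace in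
lemma integral_im_inner_iteratedDerivWithin_two_eq_zero {E : Type*} [NormedAddCommGroup E]
    [InnerProductSpace ℂ E] {A : E →L[ℂ] E} (hA : A.toLinearMap.IsSymmetric) (hab : a < b)
    {w : ℝ → E} (hw : ContDiffOn ℝ 2 w (Icc a b)) (hwa : w a = 0) (hwb : w b = 0) :
    ∫ x in a..b, (⟪w x, A (iteratedDerivWithin 2 w (Icc a b) x)⟫_ℂ).im = 0 := by
  have hU : UniqueDiffOn ℝ (Icc a b) := uniqueDiffOn_Icc hab
  have hcont {v : ℝ → E} (hv : ContinuousOn v (Icc a b)) :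
      ContinuousOn (fun x ↦ (⟪w x, A (v x)⟫_ℂ).im) (Icc a b) :=
    Complex.continuous_im.comp_continuousOn
      (hw.continuousOn.inner (𝕜 := ℂ) (A.continuous.comp_continuousOn hv))
  have hderiv : ∀ x ∈ Ioo a b,
      HasDerivAt (fun t ↦ (⟪w t, A (iteratedDerivWithin 1 w (Icc a b) t)⟫_ℂ).im)
        (⟪w x, A (iteratedDerivWithin 2 w (Icc a b) x)⟫_ℂ).im x := by
    intro x hx
    have hx' : Icc a b ∈ nhds x := Icc_mem_nhds hx.1 hx.2
    have hw' : HasDerivAt w (iteratedDerivWithin 1 w (Icc a b) x) x := by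
      simpa using hasDerivAt_iteratedDerivWithin (n := 0) (hw.of_le (by norm_num)) hU hx'
    have hw'' : HasDerivAt (iteratedDerivWithin 1 w (Icc a b))
        (iteratedDerivWithin 2 w (Icc a b) x) x :=
      hasDerivAt_iteratedDerivWithin (by simpa [one_add_one_eq_two] using hw) hU hx'
    exact hasDerivAt_im_inner_of_isSymmetric hA hw' hw''
  rw [intervalIntegral.integral_eq_sub_of_hasDerivAt_of_le hab.le
    (hcont (hw.continuousOn_iteratedDerivWithin (by norm_num) hU)) hderiv
    ((hcont (hw.continuousOn_iteratedDerivWithin le_rfl hU)).intervalIntegrable_of_Icc hab.le)]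
  simp [hwa, hwb]

lemma integral_sum_im_mul_norm_sq_eq_zero_of_isHermitian {ι : Type*} [Fintype ι] {M : Matrix ι ι ℂ}
    (hM : M.IsHermitian) {c : ι → ℂ} (hab : a < b) {w : ι → ℝ → ℂ}
    (hw : ∀ i, ContDiffOn ℝ 2 (w i) (Icc a b)) (hwa : ∀ i, w i a = 0) (hwb : ∀ i, w i b = 0)
    (heq : ∀ x ∈ Ioo a b, ∀ i,
      ∑ j, M i j * iteratedDerivWithin 2 (w j) (Icc a b) x = c i * w i x) :
    ∫ x in a..b, ∑ i, (c i).im * ‖w i x‖ ^ 2 = 0 := by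
  classical
  let W : ℝ → EuclideanSpace ℂ ι := fun x ↦ WithLp.toLp 2 fun i ↦ w i x
  have hW : ContDiffOn ℝ 2 W (Icc a b) := (contDiffOn_piLp 2).2 hw
  have hA : (Matrix.toEuclideanCLM (𝕜 := ℂ) M).toLinearMap.IsSymmetric :=
    Matrix.isSymmetric_toEuclideanLin_iff.2 hM
  have hWa : W a = 0 := by ext i; exact hwa i
  have hWb : W b = 0 := by ext i; exact hwb i
  rw [← integral_im_inner_iteratedDerivWithin_two_eq_zero hA hab hW hWa hWb]
  refine intervalIntegral.integral_congr_uIoo fun x hx ↦ ?_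
  rw [uIoo_of_le hab.le] at hx
  have hxI : x ∈ Icc a b := Ioo_subset_Icc_self hx
  have hcomp (i : ι) :
      iteratedDerivWithin 2 W (Icc a b) x i = iteratedDerivWithin 2 (w i) (Icc a b) x :=
    (iteratedDerivWithin_continuousLinearMap_comp
      ((EuclideanSpace.proj i : EuclideanSpace ℂ ι →L[ℂ] ℂ).restrictScalars ℝ) (hW x hxI)
      (uniqueDiffOn_Icc hab) hxI).symm
  have hcoord (i : ι) :
      Matrix.toEuclideanCLM (𝕜 := ℂ) M (iteratedDerivWithin 2 W (Icc a b) x) i = c i * w i x := by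
    simp [Matrix.mulVec, dotProduct, hcomp, heq x hx]
  have hterm (i : ι) : (c i).im * ‖w i x‖ ^ 2 = (c i * w i x * starRingEnd ℂ (w i x)).im := by
    rw [mul_assoc, Complex.mul_conj', ← Complex.ofReal_pow, Complex.im_mul_ofReal]
  simp only [PiLp.inner_apply, hcoord, RCLike.inner_apply, Complex.im_sum, hterm, W]

end Energy

section CoupledSystem

variable {a b : ℝ} {z u : ℝ → ℂ}

lemma coupled_dirichlet_fst_eqOn_zero {a₁ a₂ a₃ d : ℝ} {c : ℂ} (hc : c.im ≠ 0) (hab : a < b)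
    (hz : ContDiffOn ℝ 2 z (Icc a b)) (hu : ContDiffOn ℝ 2 u (Icc a b))
    (hza : z a = 0) (hzb : z b = 0) (hua : u a = 0) (hub : u b = 0)
    (heq1 : ∀ x ∈ Ioo a b, a₁ * iteratedDerivWithin 2 z (Icc a b) x +
      a₂ * iteratedDerivWithin 2 u (Icc a b) x = c * z x)
    (heq2 : ∀ x ∈ Ioo a b, a₂ * iteratedDerivWithin 2 z (Icc a b) x +
      a₃ * iteratedDerivWithin 2 u (Icc a b) x = d * u x) :
    EqOn z 0 (Icc a b) := by
  have hM : (!![(a₁ : ℂ), a₂; a₂, a₃]).IsHermitian := by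
    ext i j
    fin_cases i <;> fin_cases j <;> simp
  have henergy : ∫ x in a..b, c.im * ‖z x‖ ^ 2 = 0 := by
    simpa using integral_sum_im_mul_norm_sq_eq_zero_of_isHermitian hM (c := ![c, d])
      (w := ![z, u]) hab (Fin.forall_fin_two.2 ⟨hz, hu⟩)
      (Fin.forall_fin_two.2 ⟨hza, hua⟩) (Fin.forall_fin_two.2 ⟨hzb, hub⟩)
      (fun x hx ↦ by simpa [Fin.forall_fin_two] using ⟨heq1 x hx, heq2 x hx⟩)
  rw [intervalIntegral.integral_const_mul] at henergy
  exact eqOn_zero_of_integral_norm_sq_eq_zero hab hz.continuousOn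
    ((mul_eq_zero.1 henergy).resolve_left hc)

lemma coupled_snd_eqOn_zero_of_fst {a₁ a₂ a₃ c d : ℂ} (ha₂ : a₂ ≠ 0) (hd : d ≠ 0)
    (hab : a < b) (hu : ContinuousOn u (Icc a b))
    (heq1 : ∀ x ∈ Ioo a b, a₁ * iteratedDerivWithin 2 z (Icc a b) x +
      a₂ * iteratedDerivWithin 2 u (Icc a b) x = c * z x)
    (heq2 : ∀ x ∈ Ioo a b, a₂ * iteratedDerivWithin 2 z (Icc a b) x +
      a₃ * iteratedDerivWithin 2 u (Icc a b) x = d * u x)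
    (hz : EqOn z 0 (Icc a b)) :
    EqOn u 0 (Icc a b) := by
  have hinterior : EqOn u 0 (Ioo a b) := by
    intro x hx
    have hx' : x ∈ Icc a b := Ioo_subset_Icc_self hx
    have hz'' : iteratedDerivWithin 2 z (Icc a b) x = 0 := by
      rw [iteratedDerivWithin_congr hz hx', Pi.zero_def, iteratedDerivWithin_const]
      simp
    have hu'' : iteratedDerivWithin 2 u (Icc a b) x = 0 := by
      simpa [hz'', hz hx', ha₂] using heq1 x hx
    simpa [hz'', hu'', hd] using (heq2 x hx).symm
  exact hinterior.of_subset_closure hu continuousOn_const Ioo_subset_Icc_self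
    (closure_Ioo hab.ne).ge

end CoupledSystem

theorem stmt12_general (L α κ γ ρz ρu a₁ a₂ a₃ lam : ℝ)
    (hL : 0 < L) (hα0 : 0 < α) (hα2 : α < 2) (hκ : 0 ≤ κ) (hγ : γ ≠ 0)
    (hρu : ρu ≠ 0) (ha₂ : a₂ ≠ 0) (hlam : lam ≠ 0)
    (z u : ℝ → ℂ)
    (hz : ContDiffOn ℝ 2 z (Icc 0 L)) (hu : ContDiffOn ℝ 2 u (Icc 0 L))
    (hbz0 : z 0 = 0) (hbzL : z L = 0) (hbu0 : u 0 = 0) (hbuL : u L = 0)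
    (heq1 : ∀ x ∈ Ioo (0 : ℝ) L,
      -(ρz : ℂ) * (lam : ℂ) ^ 2 * z x -
        (a₁ : ℂ) * iteratedDerivWithin 2 z (Icc 0 L) x -
        (a₂ : ℂ) * iteratedDerivWithin 2 u (Icc 0 L) x +
        (γ : ℂ) * (Complex.I * (lam : ℂ)) *
          ((κ : ℂ) + Complex.I * (lam : ℂ)) ^ ((α : ℂ) - 1) * z x = 0)
    (heq2 : ∀ x ∈ Ioo (0 : ℝ) L,
      -(ρu : ℂ) * (lam : ℂ) ^ 2 * u x -
        (a₃ : ℂ) * iteratedDerivWithin 2 u (Icc 0 L) x -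
        (a₂ : ℂ) * iteratedDerivWithin 2 z (Icc 0 L) x = 0) :
    ∀ x ∈ Icc (0 : ℝ) L, z x = 0 ∧ u x = 0 := by
  have hdamp := re_add_I_mul_cpow_sub_one_pos hα0 hα2 hκ hlam
  set p : ℂ := ((κ : ℂ) + Complex.I * (lam : ℂ)) ^ ((α : ℂ) - 1)
  set c : ℂ := -ρz * lam ^ 2 + γ * (Complex.I * lam) * p with hc
  have hcim : c.im = γ * lam * p.re := by simp [hc, ← Complex.ofReal_pow]
  have hc0 : c.im ≠ 0 := hcim ▸ mul_ne_zero (mul_ne_zero hγ hlam) hdamp.ne'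
  set d : ℝ := -ρu * lam ^ 2 with hd
  have hd0 : (d : ℂ) ≠ 0 := by simp [hd, hρu, hlam]
  have hflux1 : ∀ x ∈ Ioo 0 L, a₁ * iteratedDerivWithin 2 z (Icc 0 L) x +
      a₂ * iteratedDerivWithin 2 u (Icc 0 L) x = c * z x :=
    fun x hx ↦ by linear_combination -heq1 x hx
  have hflux2 : ∀ x ∈ Ioo 0 L, a₂ * iteratedDerivWithin 2 z (Icc 0 L) x +
      a₃ * iteratedDerivWithin 2 u (Icc 0 L) x = d * u x :=
    fun x hx ↦ by push_cast [hd]; linear_combination -heq2 x hx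
  have hz0 := coupled_dirichlet_fst_eqOn_zero hc0 hL hz hu hbz0 hbzL hbu0 hbuL hflux1 hflux2
  have hu0 := coupled_snd_eqOn_zero_of_fst (mod_cast ha₂) hd0 hL hu.continuousOn
    hflux1 hflux2 hz0
  exact fun x hx ↦ ⟨hz0 hx, hu0 hx⟩

/-- reduced form of Lemma 5.3: the stationary system obtained by eliminating
the diffusive variable has only the trivial solution, i.e. the generator has no purely
imaginary eigenvalues `iλ`, `λ ≠ 0`. -/
theorem stmt12 (L α κ γ ρz ρu a₁ a₂ a₃ lam : ℝ)
    (hL : 0 < L) (hα0 : 0 < α) (hα1 : α < 1) (hκ : 0 ≤ κ) (hγ : 0 < γ)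
    (hρz : 0 < ρz) (hρu : 0 < ρu) (ha₁ : 0 < a₁) (ha₃ : 0 < a₃)
    (ha₂ : a₂ ≠ 0) (hA : a₂ ^ 2 ≤ a₁ * a₃) (hlam : lam ≠ 0)
    (z u : ℝ → ℂ)
    (hz : ContDiffOn ℝ 2 z (Set.Icc 0 L)) (hu : ContDiffOn ℝ 2 u (Set.Icc 0 L))
    (hbz0 : z 0 = 0) (hbzL : z L = 0) (hbu0 : u 0 = 0) (hbuL : u L = 0)
    (heq1 : ∀ x ∈ Set.Ioo (0 : ℝ) L,
      -(ρz : ℂ) * (lam : ℂ) ^ 2 * z x -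
        (a₁ : ℂ) * iteratedDerivWithin 2 z (Set.Icc 0 L) x -
        (a₂ : ℂ) * iteratedDerivWithin 2 u (Set.Icc 0 L) x +
        (γ : ℂ) * (Complex.I * (lam : ℂ)) *
          ((κ : ℂ) + Complex.I * (lam : ℂ)) ^ ((α : ℂ) - 1) * z x = 0)
    (heq2 : ∀ x ∈ Set.Ioo (0 : ℝ) L,
      -(ρu : ℂ) * (lam : ℂ) ^ 2 * u x -
        (a₃ : ℂ) * iteratedDerivWithin 2 u (Set.Icc 0 L) x -
        (a₂ : ℂ) * iteratedDerivWithin 2 z (Set.Icc 0 L) x = 0) :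
    ∀ x ∈ Set.Icc (0 : ℝ) L, z x = 0 ∧ u x = 0 :=
  stmt12_general L α κ γ ρz ρu a₁ a₂ a₃ lam hL hα0 (hα1.trans one_lt_two) hκ hγ.ne' hρu.ne' ha₂ hlam
    z u hz hu hbz0 hbzL hbu0 hbuL heq1 heq2
end
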